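/- Let f : ℝ² → ℝ² be a C^∞ map with f(0)=0 of the form f = (x, y³ + Σ_{i+j≥4} a_{ij} x^i y^j). Then: (i) a_{31} ≠ 0 if and only if f is A-equivalent to (x,y) ↦ (x, y³ + x³y) (goose); (ii) (a_{31} = 0 and a_{41} − (1/3)a_{22}² ≠ 0) if and only if f is A-equivalent to (x,y) ↦ (x, y³ + εx⁴y) for some ε ∈ {1,−1} (ugly goose); (iii) (a_{31} = 0, a_{41} − (1/3)a_{22}² = 0, and a_{51} − (2/3)a_{32}a_{22} + (1/3)a_{13}a_{22}² ≠ 0) if and only if f is A-equivalent to (x,y) ↦ (x, y³ + εx⁵y) for some ε ∈ {1,−1}. -/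

import Mathlib

open Filter Topology

noncomputable section

/-- Directional derivative of a scalar function. -/
def dop (v : ℝ × ℝ) (g : ℝ × ℝ → ℝ) : ℝ × ℝ → ℝ :=
  fun p => fderiv ℝ g p v

/-- Partial derivative operator in the first coordinate. -/
def pdx : (ℝ × ℝ → ℝ) → ℝ × ℝ → ℝ := dop (1, 0)

/-- Partial derivative operator in the second coordinate. -/
def pdy : (ℝ × ℝ → ℝ) → ℝ × ℝ → ℝ := dop (0, 1)

/-- Taylor coefficient `a_{ij} = ∂_x^i ∂_y^j g(0,0) / (i! j!)` of `g` at the origin. -/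
def tcoeff (g : ℝ × ℝ → ℝ) (i j : ℕ) : ℝ :=
  (pdx^[i] (pdy^[j] g)) 0 / (Nat.factorial i * Nat.factorial j)

/-- The Jacobian determinant `λ_f` of a map `f : ℝ² → ℝ²`. -/
def jacDet (f : ℝ × ℝ → ℝ × ℝ) (p : ℝ × ℝ) : ℝ :=
  (fderiv ℝ f p (1, 0)).1 * (fderiv ℝ f p (0, 1)).2 -
    (fderiv ℝ f p (1, 0)).2 * (fderiv ℝ f p (0, 1)).1

/-- `f` has corank one at `0` : the derivative of `f` at `0` has rank one. -/
def CorankOne (f : ℝ × ℝ → ℝ × ℝ) : Prop :=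
  LinearMap.rank ((fderiv ℝ f 0).toLinearMap) = 1

/-- `η` is a null vector field for `f` near `0`. -/
def IsNullVF (f η : ℝ × ℝ → ℝ × ℝ) : Prop :=
  η 0 ≠ 0 ∧ ∃ U ∈ 𝓝 (0 : ℝ × ℝ),
    ContDiffOn ℝ (⊤ : ℕ∞) η U ∧ ∀ p ∈ U, jacDet f p = 0 → fderiv ℝ f p (η p) = 0

/-- The derivative `(ηg)(p) = Dg(p)(η(p))` of `g` along the vector field `η`. -/
def etaD (η : ℝ × ℝ → ℝ × ℝ) (g : ℝ × ℝ → ℝ) : ℝ × ℝ → ℝ :=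
  fun p => fderiv ℝ g p (η p)

/-- The iterated derivative `η^k g` along the vector field `η`. -/
def etaIter (η : ℝ × ℝ → ℝ × ℝ) : ℕ → (ℝ × ℝ → ℝ) → ℝ × ℝ → ℝ
  | 0, g => g
  | k + 1, g => etaD η (etaIter η k g)

/-- The Hessian matrix of second partial derivatives of `g` at `0`. -/
def hess (g : ℝ × ℝ → ℝ) : Matrix (Fin 2) (Fin 2) ℝ :=
  !![pdx (pdx g) 0, pdx (pdy g) 0; pdy (pdx g) 0, pdy (pdy g) 0]

/-- `A^r`-equivalence of the `r`-jets at `0` of two map-germs `(ℝ²,0) → (ℝ²,0)`. -/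
def JetEquiv (r : ℕ) (f g : ℝ × ℝ → ℝ × ℝ) : Prop :=
  ∃ φ ψ : ℝ × ℝ → ℝ × ℝ,
    ContDiff ℝ (⊤ : ℕ∞) φ ∧ ContDiff ℝ (⊤ : ℕ∞) ψ ∧ φ 0 = 0 ∧ ψ 0 = 0 ∧
    Function.Bijective (⇑(fderiv ℝ φ 0)) ∧ Function.Bijective (⇑(fderiv ℝ ψ 0)) ∧
    ∀ i ≤ r, iteratedFDeriv ℝ i (ψ ∘ f ∘ φ) 0 = iteratedFDeriv ℝ i g 0

/-- `A`-equivalence of two map-germs `(ℝ²,0) → (ℝ²,0)`. -/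
def AEquiv (f g : ℝ × ℝ → ℝ × ℝ) : Prop :=
  ∃ φ ψ : ℝ × ℝ → ℝ × ℝ,
    ContDiff ℝ (⊤ : ℕ∞) φ ∧ ContDiff ℝ (⊤ : ℕ∞) ψ ∧ φ 0 = 0 ∧ ψ 0 = 0 ∧
    Function.Bijective (⇑(fderiv ℝ φ 0)) ∧ Function.Bijective (⇑(fderiv ℝ ψ 0)) ∧
    ∀ᶠ p in 𝓝 (0 : ℝ × ℝ), ψ (f (φ p)) = g p

/-- `f` has the form `(x, g(x,y))` where `g` is `C^∞` and the Taylor coefficients of `g`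
of total degree `< N` at the origin are prescribed by `P`. -/
def HasForm (f : ℝ × ℝ → ℝ × ℝ) (g : ℝ × ℝ → ℝ) (N : ℕ) (P : ℕ → ℕ → ℝ) : Prop :=
  ContDiff ℝ (⊤ : ℕ∞) g ∧ (∀ p, f p = (p.1, g p)) ∧
    ∀ i j, i + j < N → tcoeff g i j = P i j

/-!
If `g(0, ·)` vanishes to order exactly three, then `(x, g)` is `A`-equivalent to `(x, y³ + a(x) y)`.
To see this, split `g` along the fibres as `g(x, s + w) = E(x, s, w²) + w O(x, s, w²)` with `E`, `O`
smooth (Whitney), choose `s(x)` and `u(x)` by the implicit function theorem so that `g` becomes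
`e(x) + q(x) (w³ - 3 u(x) w)` modulo `(w² - u(x))²`, and absorb the remainder into a change of `w`.
The order of vanishing of `a` is an invariant: it is the highest order of contact of a regular curve
germ with the cusp equations `g_y = g_yy = 0`. When it equals `k`, rescaling `x` by a smooth `k`-th
root turns `a` into `± x ^ k`, and `x ↦ -x` removes the sign for odd `k`.

The contact order can be read off from `g_y` along any curve `y = Y(x)` on which `g_yy` vanishes to
at least half that order, since moving `y` by `O(x ^ m)` where `g_yy = O(x ^ m)` changes `g_y` by
`O(x ^ (2m))` only. For the three-jet `y³` the parabola `y = -(a₂₂ / 3) x²` has `m = 3`, and the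
coefficients of `x³`, `x⁴`, `x⁵` in `g_y` along it are the three quantities of the theorem.
-/

section

open scoped ContDiff

section LocalDiffeomorphisms

variable {E F : Type*} [NormedAddCommGroup E] [NormedSpace ℝ E] [FiniteDimensional ℝ E]
  [NormedAddCommGroup F] [NormedSpace ℝ F]

lemma exists_contDiff_eventuallyEq {f : E → F} {a : E} (hf : ∀ᶠ x in 𝓝 a, ContDiffAt ℝ ∞ f x) :
    ∃ f' : E → F, ContDiff ℝ ∞ f' ∧ f' =ᶠ[𝓝 a] f := by
  obtain ⟨r, hr, hrs⟩ := Metric.nhds_basis_closedBall.mem_iff.1 hf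
  let χ : ContDiffBump a := ⟨r / 2, r, half_pos hr, half_lt_self hr⟩
  refine ⟨fun x => χ x • f x, contDiff_iff_contDiffAt.2 fun x => ?_, ?_⟩
  · by_cases hx : x ∈ tsupport fun x => χ x • f x
    · have hxr : x ∈ Metric.closedBall a r :=
        χ.tsupport_eq ▸ closure_mono (Function.support_smul_subset_left _ _) hx
      exact χ.contDiffAt.smul (hrs hxr)
    · exact (contDiffAt_const (c := (0 : F))).congr_of_eventuallyEq
        (notMem_tsupport_iff_eventuallyEq.1 hx)
  · filter_upwards [χ.eventuallyEq_one] with x hx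
    rw [hx, Pi.one_apply, one_smul]

variable [FiniteDimensional ℝ F]

lemma exists_contDiff_localInverse {Φ : E → F} {a : E} (hΦ : ContDiff ℝ ∞ Φ)
    (hb : Function.Bijective (fderiv ℝ Φ a)) :
    ∃ Θ : F → E, ContDiff ℝ ∞ Θ ∧ (∀ᶠ p in 𝓝 a, Θ (Φ p) = p) ∧
      ∀ᶠ q in 𝓝 (Φ a), Φ (Θ q) = q := by
  have hd (x : E) : HasFDerivAt Φ (fderiv ℝ Φ x) x := (hΦ.differentiable (by simp) x).hasFDerivAt
  let L : E ≃L[ℝ] F :=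
    (LinearEquiv.ofBijective (fderiv ℝ Φ a).toLinearMap hb).toContinuousLinearEquiv
  have hL : (L : E →L[ℝ] F) = fderiv ℝ Φ a := rfl
  let e := hΦ.contDiffAt.toOpenPartialHomeomorph Φ (hL ▸ hd a) (by simp)
  have ha : a ∈ e.source := hΦ.contDiffAt.mem_toOpenPartialHomeomorph_source (hL ▸ hd a) (by simp)
  have hinv : ∀ᶠ x in 𝓝 a, fderiv ℝ Φ x ∈ Set.range ((↑) : (E ≃L[ℝ] F) → E →L[ℝ] F) :=
    (hΦ.continuous_fderiv (by simp)).continuousAt.eventually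
      (ContinuousLinearEquiv.isOpen.mem_nhds ⟨L, hL⟩)
  have hsymm : ∀ᶠ q in 𝓝 (Φ a), ContDiffAt ℝ ∞ e.symm q := by
    filter_upwards [e.eventually_nhds' _ ha |>.2 hinv, e.open_target.mem_nhds (e.map_source ha)]
      with q ⟨M, hM⟩ hq
    exact e.contDiffAt_symm hq (hM ▸ hd _) hΦ.contDiffAt
  obtain ⟨Θ, hΘ, hΘe⟩ := exists_contDiff_eventuallyEq hsymm
  refine ⟨Θ, hΘ, ?_, ?_⟩
  · filter_upwards [hΦ.continuous.continuousAt.eventually hΘe, e.open_source.mem_nhds ha]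
      with p hp hps
    exact hp.trans (e.left_inv hps)
  · filter_upwards [hΘe, e.open_target.mem_nhds (e.map_source ha)] with q hq hqt
    exact hq ▸ e.right_inv hqt

lemma exists_contDiff_implicit {H : E × F → F} {a : E} {b : F} {D : F →L[ℝ] F}
    (hH : ContDiff ℝ ∞ H) (h0 : H (a, b) = 0) (hD : HasFDerivAt (fun y => H (a, y)) D b)
    (hinj : Function.Injective D) :
    ∃ σ : E → F, ContDiff ℝ ∞ σ ∧ σ a = b ∧ ∀ᶠ x in 𝓝 a, H (x, σ x) = 0 := by
  have hH' : HasFDerivAt H (fderiv ℝ H (a, b)) (a, b) :=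
    (hH.differentiable (by simp) _).hasFDerivAt
  have hslice : ∀ v, fderiv ℝ H (a, b) (0, v) = D v := fun v =>
    congrArg (· v) ((hH'.comp b (hasFDerivAt_prodMk_right a b)).unique hD)
  let Φ : E × F → E × F := fun p => (p.1, H p)
  have hΦ : ContDiff ℝ ∞ Φ := contDiff_fst.prodMk hH
  have hb : Function.Bijective (fderiv ℝ Φ (a, b)) := by
    have hi : Function.Injective (fderiv ℝ Φ (a, b)).toLinearMap := by
      rw [← LinearMap.ker_eq_bot, LinearMap.ker_eq_bot', (hasFDerivAt_fst.prodMk hH').fderiv]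
      rintro ⟨u, v⟩ huv
      obtain rfl : u = 0 := congrArg Prod.fst huv
      have hv : D v = D 0 := by rw [← hslice, map_zero]; exact congrArg Prod.snd huv
      rw [hinj hv, Prod.mk_zero_zero]
    exact ⟨hi, LinearMap.injective_iff_surjective.1 hi⟩
  obtain ⟨Θ, hΘ, hleft, hright⟩ := exists_contDiff_localInverse hΦ hb
  have hΦab : Φ (a, b) = (a, 0) := Prod.ext rfl h0
  rw [hΦab] at hright
  refine ⟨fun x => (Θ (x, 0)).2, by fun_prop, ?_, ?_⟩
  · exact congrArg Prod.snd (hΦab ▸ hleft.self_of_nhds)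
  · have hcont : ContinuousAt (fun x : E => (x, (0 : F))) a := by fun_prop
    filter_upwards [hcont.eventually hright] with x hx
    have hfst : (Θ (x, 0)).1 = x := congrArg Prod.fst hx
    have hpair : (x, (Θ (x, 0)).2) = Θ (x, 0) := Prod.ext hfst.symm rfl
    exact hpair ▸ congrArg Prod.snd hx

lemma exists_contDiff_implicit_real {H : E × ℝ → ℝ} {a : E} {b d : ℝ} (hH : ContDiff ℝ ∞ H)
    (h0 : H (a, b) = 0) (hd : HasDerivAt (fun y => H (a, y)) d b) (hd0 : d ≠ 0) :
    ∃ σ : E → ℝ, ContDiff ℝ ∞ σ ∧ σ a = b ∧ ∀ᶠ x in 𝓝 a, H (x, σ x) = 0 :=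
  exists_contDiff_implicit hH h0 hd.hasFDerivAt fun v w hvw => by simpa [hd0] using hvw

end LocalDiffeomorphisms

section PartialDerivatives

variable {g : ℝ × ℝ → ℝ}

lemma contDiff_dop (hg : ContDiff ℝ ∞ g) (v : ℝ × ℝ) : ContDiff ℝ ∞ (dop v g) :=
  (hg.fderiv_right (m := ∞) (by simp)).clm_apply contDiff_const

lemma contDiff_pdx (hg : ContDiff ℝ ∞ g) : ContDiff ℝ ∞ (pdx g) := contDiff_dop hg _

lemma contDiff_pdy (hg : ContDiff ℝ ∞ g) : ContDiff ℝ ∞ (pdy g) := contDiff_dop hg _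

lemma contDiff_iterate_pdx (hg : ContDiff ℝ ∞ g) (n : ℕ) : ContDiff ℝ ∞ (pdx^[n] g) :=
  Function.Iterate.rec (ContDiff ℝ ∞) hg (fun _ => contDiff_pdx) n

lemma contDiff_iterate_pdy (hg : ContDiff ℝ ∞ g) (n : ℕ) : ContDiff ℝ ∞ (pdy^[n] g) :=
  Function.Iterate.rec (ContDiff ℝ ∞) hg (fun _ => contDiff_pdy) n

lemma hasDerivAt_comp_prodMk (hg : ContDiff ℝ ∞ g) {a b : ℝ → ℝ} {a' b' t : ℝ}
    (ha : HasDerivAt a a' t) (hb : HasDerivAt b b' t) :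
    HasDerivAt (fun t => g (a t, b t)) (a' * pdx g (a t, b t) + b' * pdy g (a t, b t)) t := by
  have hgd := (hg.differentiable (by simp) (a t, b t)).hasFDerivAt.comp_hasDerivAt t (ha.prodMk hb)
  have hsplit : (a', b') = a' • ((1, 0) : ℝ × ℝ) + b' • ((0, 1) : ℝ × ℝ) := by simp
  rwa [hsplit, map_add, map_smul, map_smul] at hgd

lemma hasDerivAt_pdx (hg : ContDiff ℝ ∞ g) (x y : ℝ) :
    HasDerivAt (fun t => g (t, y)) (pdx g (x, y)) x := by
  simpa using hasDerivAt_comp_prodMk hg (hasDerivAt_id x) (hasDerivAt_const x y)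

lemma hasDerivAt_pdy (hg : ContDiff ℝ ∞ g) (x y : ℝ) :
    HasDerivAt (fun t => g (x, t)) (pdy g (x, y)) y := by
  simpa using hasDerivAt_comp_prodMk hg (hasDerivAt_const y x) (hasDerivAt_id y)

lemma iteratedDeriv_pdy (hg : ContDiff ℝ ∞ g) (n : ℕ) (x : ℝ) :
    iteratedDeriv n (fun t => g (x, t)) = fun t => (pdy^[n] g) (x, t) := by
  induction n with
  | zero => rfl
  | succ n ih =>
    rw [iteratedDeriv_succ, ih, Function.iterate_succ_apply']
    exact funext fun t => (hasDerivAt_pdy (contDiff_iterate_pdy hg n) x t).deriv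

lemma iteratedDeriv_pdx (hg : ContDiff ℝ ∞ g) (n : ℕ) (y : ℝ) :
    iteratedDeriv n (fun t => g (t, y)) = fun t => (pdx^[n] g) (t, y) := by
  induction n with
  | zero => rfl
  | succ n ih =>
    rw [iteratedDeriv_succ, ih, Function.iterate_succ_apply']
    exact funext fun t => (hasDerivAt_pdx (contDiff_iterate_pdx hg n) t y).deriv

end PartialDerivatives

/-- A smooth self-map fixing the origin whose germ there is a diffeomorphism. -/
structure IsDiffeoGerm {E : Type*} [NormedAddCommGroup E] [NormedSpace ℝ E] (φ : E → E) :
    Prop where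
  contDiff : ContDiff ℝ ∞ φ
  map_zero : φ 0 = 0
  bijective_fderiv : Function.Bijective (fderiv ℝ φ 0)

namespace IsDiffeoGerm

variable {E : Type*} [NormedAddCommGroup E] [NormedSpace ℝ E] {φ ψ : E → E}

lemma id : IsDiffeoGerm fun p : E => p :=
  ⟨contDiff_id, rfl, by rw [fderiv_fun_id]; exact Function.bijective_id⟩

lemma comp (hφ : IsDiffeoGerm φ) (hψ : IsDiffeoGerm ψ) : IsDiffeoGerm fun p => φ (ψ p) where
  contDiff := hφ.contDiff.comp hψ.contDiff
  map_zero := by rw [hψ.map_zero, hφ.map_zero]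
  bijective_fderiv := by
    rw [fderiv_fun_comp 0 (hφ.contDiff.differentiable (by simp) _)
      (hψ.contDiff.differentiable (by simp) _), hψ.map_zero]
    exact hφ.bijective_fderiv.comp hψ.bijective_fderiv

lemma tendsto (hφ : IsDiffeoGerm φ) : Tendsto φ (𝓝 0) (𝓝 0) := by
  simpa [hφ.map_zero] using hφ.contDiff.continuous.tendsto 0

lemma exists_inverse [FiniteDimensional ℝ E] (hφ : IsDiffeoGerm φ) :
    ∃ θ, IsDiffeoGerm θ ∧ (∀ᶠ p in 𝓝 0, θ (φ p) = p) ∧ ∀ᶠ p in 𝓝 0, φ (θ p) = p := by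
  obtain ⟨θ, hθ, hleft, hright⟩ := exists_contDiff_localInverse hφ.contDiff hφ.bijective_fderiv
  rw [hφ.map_zero] at hright
  refine ⟨θ, ⟨hθ, ?_, ?_⟩, hleft, hright⟩
  · simpa [hφ.map_zero] using hleft.self_of_nhds
  · have hcomp : (fderiv ℝ θ 0).comp (fderiv ℝ φ 0) = ContinuousLinearMap.id ℝ E := by
      have hd : fderiv ℝ (fun p => θ (φ p)) 0 = _ := fderiv_fun_comp (0 : E)
        (hθ.differentiable (by simp) _) (hφ.contDiff.differentiable (by simp) _)
      rw [hφ.map_zero] at hd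
      rw [← hd, EventuallyEq.fderiv_eq (f := fun p => p) hleft, fderiv_fun_id]
    refine (Function.Bijective.of_comp_iff _ hφ.bijective_fderiv).1 ?_
    rw [← ContinuousLinearMap.coe_comp, hcomp]
    exact Function.bijective_id

lemma prodMk_fst {ξ : ℝ → ℝ} {h : ℝ × ℝ → ℝ} (hξ : ContDiff ℝ ∞ ξ) (hξ0 : ξ 0 = 0)
    (hξ' : deriv ξ 0 ≠ 0) (hh : ContDiff ℝ ∞ h) (hh0 : h 0 = 0) (hh' : pdy h 0 ≠ 0) :
    IsDiffeoGerm fun p : ℝ × ℝ => (ξ p.1, h p) where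
  contDiff := by fun_prop
  map_zero := by simp [hξ0, hh0]
  bijective_fderiv := by
    have hd : HasFDerivAt (fun p : ℝ × ℝ => (ξ p.1, h p))
        ((deriv ξ 0 • ContinuousLinearMap.fst ℝ ℝ ℝ).prod (fderiv ℝ h 0)) 0 :=
      ((hξ.differentiable (by simp) 0).hasDerivAt.comp_hasFDerivAt (0 : ℝ × ℝ)
        hasFDerivAt_fst).prodMk (hh.differentiable (by simp) 0).hasFDerivAt
    have hi : Function.Injective (fderiv ℝ (fun p : ℝ × ℝ => (ξ p.1, h p)) 0).toLinearMap := by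
      rw [← LinearMap.ker_eq_bot, LinearMap.ker_eq_bot', hd.fderiv]
      rintro ⟨u, v⟩ huv
      obtain rfl : u = 0 := by simpa [hξ'] using congrArg Prod.fst huv
      have hv : v * pdy h 0 = 0 := by
        have hsmul : ((0, v) : ℝ × ℝ) = v • (0, 1) := by simp
        have hsnd : fderiv ℝ h 0 (0, v) = 0 := congrArg Prod.snd huv
        rwa [hsmul, map_smul] at hsnd
      rw [(mul_eq_zero.1 hv).resolve_right hh', Prod.mk_zero_zero]
    exact ⟨hi, LinearMap.injective_iff_surjective.1 hi⟩

end IsDiffeoGerm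

namespace AEquiv

variable {f g h : ℝ × ℝ → ℝ × ℝ}

lemma iff_exists_isDiffeoGerm : AEquiv f g ↔
    ∃ φ ψ, IsDiffeoGerm φ ∧ IsDiffeoGerm ψ ∧ ∀ᶠ p in 𝓝 0, ψ (f (φ p)) = g p :=
  ⟨fun ⟨φ, ψ, hφ, hψ, hφ0, hψ0, hφb, hψb, h⟩ => ⟨φ, ψ, ⟨hφ, hφ0, hφb⟩, ⟨hψ, hψ0, hψb⟩, h⟩,
    fun ⟨φ, ψ, hφ, hψ, h⟩ => ⟨φ, ψ, hφ.1, hψ.1, hφ.2, hψ.2, hφ.3, hψ.3, h⟩⟩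

lemma of_eventually_eq {φ ψ χ : ℝ × ℝ → ℝ × ℝ} (hφ : IsDiffeoGerm φ) (hψ : IsDiffeoGerm ψ)
    (hχ : IsDiffeoGerm χ) (hg : Tendsto g (𝓝 0) (𝓝 0))
    (h : ∀ᶠ p in 𝓝 0, f (φ p) = ψ (g (χ p))) : AEquiv f g := by
  obtain ⟨ψ', hψ', hψleft, -⟩ := hψ.exists_inverse
  obtain ⟨χ', hχ', -, hχright⟩ := hχ.exists_inverse
  refine iff_exists_isDiffeoGerm.2 ⟨_, ψ', hφ.comp hχ', hψ', ?_⟩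
  filter_upwards [hχ'.tendsto.eventually h, hχright, hg.eventually hψleft] with p h₁ h₂ h₃
  rw [h₁, h₂, h₃]

lemma symm (hf : Tendsto f (𝓝 0) (𝓝 0)) (h : AEquiv f g) : AEquiv g f := by
  obtain ⟨φ, ψ, hφ, hψ, heq⟩ := iff_exists_isDiffeoGerm.1 h
  exact of_eventually_eq .id hψ hφ hf (heq.mono fun p hp => hp.symm)

lemma trans (hfg : AEquiv f g) (hgh : AEquiv g h) : AEquiv f h := by
  obtain ⟨φ, ψ, hφ, hψ, heq⟩ := iff_exists_isDiffeoGerm.1 hfg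
  obtain ⟨φ', ψ', hφ', hψ', heq'⟩ := iff_exists_isDiffeoGerm.1 hgh
  refine iff_exists_isDiffeoGerm.2 ⟨_, _, hφ.comp hφ', hψ'.comp hψ, ?_⟩
  filter_upwards [hφ'.tendsto.eventually heq, heq'] with p hp hp'
  rw [hp, hp']

end AEquiv

section ParametricIntegrals

open MeasureTheory

universe u

variable {X : Type*} [MeasurableSpace X] {μ : Measure X} {P V W Z : Type u}
  [NormedAddCommGroup P] [NormedSpace ℝ P] [NormedAddCommGroup V] [NormedSpace ℝ V]
  [NormedAddCommGroup W] [NormedSpace ℝ W] [NormedAddCommGroup Z] [NormedSpace ℝ Z]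
  {L : X → P →L[ℝ] V} {A : X → W →L[ℝ] Z} {Φ : V → W}

/-- The operator turning `DΦ` into the integrand of the derivative of `p ↦ ∫ A ξ (Φ (L ξ p))`:
it sends `T : V →L W` to `A ξ ∘ T ∘ L ξ`. -/
def sandwich (A : W →L[ℝ] Z) (L : P →L[ℝ] V) : (V →L[ℝ] W) →L[ℝ] P →L[ℝ] Z :=
  (ContinuousLinearMap.compL ℝ P W Z A).comp ((ContinuousLinearMap.compL ℝ P V W).flip L)

lemma norm_sandwich_le (A : W →L[ℝ] Z) (L : P →L[ℝ] V) : ‖sandwich A L‖ ≤ ‖A‖ * (1 + ‖L‖) := by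
  refine ContinuousLinearMap.opNorm_le_bound _ (by positivity) fun T => ?_
  calc ‖A.comp (T.comp L)‖ ≤ ‖A‖ * (‖T‖ * ‖L‖) :=
        (A.opNorm_comp_le _).trans (by gcongr; exact T.opNorm_comp_le L)
    _ ≤ ‖A‖ * (‖T‖ * (1 + ‖L‖)) := by
        gcongr
        exact le_add_of_nonneg_left zero_le_one
    _ = ‖A‖ * (1 + ‖L‖) * ‖T‖ := by ring

lemma aestronglyMeasurable_sandwich (hA : AEStronglyMeasurable A μ)
    (hL : AEStronglyMeasurable L μ) :
    AEStronglyMeasurable (fun ξ => sandwich (A ξ) (L ξ)) μ := by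
  have hcont : Continuous fun q : (W →L[ℝ] Z) × (P →L[ℝ] V) => sandwich q.1 q.2 := by
    unfold sandwich; fun_prop
  exact hcont.comp_aestronglyMeasurable (hA.prodMk hL)

lemma aestronglyMeasurable_clm_apply_comp (hA : AEStronglyMeasurable A μ)
    (hL : AEStronglyMeasurable L μ) (hΦ : Continuous Φ) (p : P) :
    AEStronglyMeasurable (fun ξ => A ξ (Φ (L ξ p))) μ := by
  have hcont : Continuous fun q : (W →L[ℝ] Z) × (P →L[ℝ] V) => q.1 (Φ (q.2 p)) := by fun_prop
  exact hcont.comp_aestronglyMeasurable (hA.prodMk hL)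

lemma hasFDerivAt_integral_clm_comp (hΦ : ContDiff ℝ 1 Φ) (hA : AEStronglyMeasurable A μ)
    (hL : AEStronglyMeasurable L μ)
    (hint : ∀ m : ℕ, Integrable (fun ξ => ‖A ξ‖ * (1 + ‖L ξ‖) ^ m) μ) {p : P}
    (hbound : ∀ n ≤ 1, ∃ (m : ℕ) (C : ℝ), ∃ U ∈ 𝓝 p, ∀ᵐ ξ ∂μ, ∀ q ∈ U,
      ‖iteratedFDeriv ℝ n Φ (L ξ q)‖ ≤ C * (1 + ‖L ξ‖) ^ m) :
    HasFDerivAt (fun q => ∫ ξ, A ξ (Φ (L ξ q)) ∂μ)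
      (∫ ξ, sandwich (A ξ) (L ξ) (fderiv ℝ Φ (L ξ p)) ∂μ) p := by
  obtain ⟨m₀, C₀, U₀, hU₀, hC₀⟩ := hbound 0 zero_le_one
  obtain ⟨m, C, U, hU, hC⟩ := hbound 1 le_rfl
  simp only [norm_iteratedFDeriv_zero] at hC₀
  simp only [norm_iteratedFDeriv_one] at hC
  refine hasFDerivAt_integral_of_dominated_of_fderiv_le hU
    (F' := fun q ξ => sandwich (A ξ) (L ξ) (fderiv ℝ Φ (L ξ q)))
    (.of_forall fun q => aestronglyMeasurable_clm_apply_comp hA hL hΦ.continuous q) ?_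
    (aestronglyMeasurable_clm_apply_comp (aestronglyMeasurable_sandwich hA hL) hL
      (hΦ.continuous_fderiv (by simp)) p)
    (bound := fun ξ => C * (‖A ξ‖ * (1 + ‖L ξ‖) ^ (m + 1))) ?_
    ((hint (m + 1)).const_mul C) (.of_forall fun ξ q _ => ?_)
  · refine ((hint m₀).const_mul C₀).mono'
      (aestronglyMeasurable_clm_apply_comp hA hL hΦ.continuous p) (hC₀.mono fun ξ hξ => ?_)
    rw [mul_left_comm]
    exact (A ξ).le_opNorm_of_le (hξ p (mem_of_mem_nhds hU₀))
  · filter_upwards [hC] with ξ hξ q hq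
    refine (ContinuousLinearMap.le_of_opNorm_le_of_le _ (norm_sandwich_le _ _)
      (hξ q hq)).trans_eq ?_
    ring
  · have hΦq := (hΦ.differentiable (by simp) (L ξ q)).hasFDerivAt
    exact (A ξ).hasFDerivAt.comp q (hΦq.comp q (L ξ).hasFDerivAt)

lemma contDiff_integral_clm_comp (hΦ : ContDiff ℝ ∞ Φ) (hA : AEStronglyMeasurable A μ)
    (hL : AEStronglyMeasurable L μ)
    (hint : ∀ m : ℕ, Integrable (fun ξ => ‖A ξ‖ * (1 + ‖L ξ‖) ^ m) μ)
    (hbound : ∀ (n : ℕ) (p : P), ∃ (m : ℕ) (C : ℝ), ∃ U ∈ 𝓝 p, ∀ᵐ ξ ∂μ, ∀ q ∈ U,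
      ‖iteratedFDeriv ℝ n Φ (L ξ q)‖ ≤ C * (1 + ‖L ξ‖) ^ m) :
    ContDiff ℝ ∞ fun p => ∫ ξ, A ξ (Φ (L ξ p)) ∂μ := by
  refine contDiff_infty.2 fun n => ?_
  induction n generalizing W Z with
  | zero =>
    exact contDiff_zero.2 (continuous_iff_continuousAt.2 fun p =>
      (hasFDerivAt_integral_clm_comp (hΦ.of_le (by simp)) hA hL hint
        fun n _ => hbound n p).continuousAt)
  | succ n ih =>
    refine contDiff_succ_iff_hasFDerivAt.2
      ⟨fun p => ∫ ξ, sandwich (A ξ) (L ξ) (fderiv ℝ Φ (L ξ p)) ∂μ, ?_, fun p => ?_⟩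
    · refine ih (hΦ.fderiv_right (by simp)) (aestronglyMeasurable_sandwich hA hL) (fun m => ?_)
        fun n p => by simpa only [norm_iteratedFDeriv_fderiv] using hbound (n + 1) p
      refine (hint (m + 1)).mono' ((aestronglyMeasurable_sandwich hA hL).norm.mul
        ((hL.norm.const_add 1).pow m)) (.of_forall fun ξ => ?_)
      rw [Real.norm_of_nonneg (by positivity), pow_succ', ← mul_assoc]
      gcongr
      exact norm_sandwich_le _ _
    · exact hasFDerivAt_integral_clm_comp (hΦ.of_le (by simp)) hA hL hint
        fun n _ => hbound n p

end ParametricIntegrals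

section Taylor

open MeasureTheory

variable {P : Type} [NormedAddCommGroup P] [NormedSpace ℝ P] [FiniteDimensional ℝ P]

lemma exists_contDiff_hadamard {H : P × ℝ → ℝ} (hH : ContDiff ℝ ∞ H) :
    ∃ R : P × ℝ → ℝ, ContDiff ℝ ∞ R ∧ ∀ x y, H (x, y) = H (x, 0) + y * R (x, y) := by
  let L : ℝ → P × ℝ →L[ℝ] P × ℝ := fun t => (ContinuousLinearMap.fst ℝ P ℝ).prod
    (t • ContinuousLinearMap.snd ℝ P ℝ)
  have hL : Continuous L := continuous_clm_apply.2 fun q =>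
    (by fun_prop : Continuous fun t : ℝ => (q.1, t * q.2))
  let H' : P × ℝ → ℝ := fun q => fderiv ℝ H q (0, 1)
  have hH' : ContDiff ℝ ∞ H' := (hH.fderiv_right (by simp)).clm_apply contDiff_const
  refine ⟨fun q => ∫ t in Set.Icc (0 : ℝ) 1, H' (L t q), ?_, fun x y => ?_⟩
  · refine contDiff_integral_clm_comp (A := fun _ => .id ℝ ℝ) hH' (by fun_prop)
      hL.aestronglyMeasurable (fun m => ?_) fun n p => ?_
    · exact ContinuousOn.integrableOn_compact isCompact_Icc (by fun_prop)
    · have hcont : Continuous fun z : ℝ × (P × ℝ) => iteratedFDeriv ℝ n H' (L z.1 z.2) :=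
        (hH'.continuous_iteratedFDeriv (by exact_mod_cast le_top)).comp (by fun_prop)
      obtain ⟨C, hC⟩ := (isCompact_Icc.prod (isCompact_closedBall p 1)).exists_bound_of_continuousOn
        hcont.continuousOn
      refine ⟨0, C, _, Metric.closedBall_mem_nhds p one_pos, ?_⟩
      filter_upwards [ae_restrict_mem measurableSet_Icc] with t ht q hq
      rw [pow_zero, mul_one]
      exact hC (t, q) ⟨ht, hq⟩
  · have hderiv (t : ℝ) : HasDerivAt (fun t => H (x, t * y)) (y * H' (x, t * y)) t := by
      have hline : HasDerivAt (fun t => (x, t * y)) ((0, y) : P × ℝ) t :=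
        (hasDerivAt_const t x).prodMk (by simpa using (hasDerivAt_id t).mul_const y)
      have hcomp := (hH.differentiable (by simp) _).hasFDerivAt.comp_hasDerivAt t hline
      have hsmul : ((0, y) : P × ℝ) = y • (0, 1) := by simp
      rwa [hsmul, map_smul] at hcomp
    have hftc := intervalIntegral.integral_eq_sub_of_hasDerivAt (a := 0) (b := 1)
      (fun t _ => hderiv t) ((by fun_prop : Continuous _).intervalIntegrable _ _)
    rw [intervalIntegral.integral_const_mul, intervalIntegral.integral_of_le zero_le_one,
      ← integral_Icc_eq_integral_Ioc, one_mul, zero_mul] at hftc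
    exact (sub_eq_iff_eq_add'.1 hftc.symm)

lemma iteratedDeriv_succ_id_mul_zero {r : ℝ → ℝ} (hr : ContDiff ℝ ∞ r) (n : ℕ) :
    iteratedDeriv (n + 1) (fun t => t * r t) 0 = (n + 1) * iteratedDeriv n r 0 := by
  rw [iteratedDeriv_fun_mul (f := fun t => t) contDiffAt_id
    (hr.contDiffAt.of_le (by exact_mod_cast le_top)), Finset.sum_eq_single_of_mem 1 (by simp)]
  · simp [iteratedDeriv_one]
  · rintro (_ | _ | i) - hi
    · simp
    · exact absurd rfl hi
    · simp [iteratedDeriv_succ']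

lemma exists_contDiff_taylor_param {H : P × ℝ → ℝ} (hH : ContDiff ℝ ∞ H) (n : ℕ) :
    ∃ R : P × ℝ → ℝ, ContDiff ℝ ∞ R ∧ ∀ x y, H (x, y) =
      (∑ j ∈ Finset.range n, iteratedDeriv j (fun t => H (x, t)) 0 / j.factorial * y ^ j) +
        y ^ n * R (x, y) := by
  induction n generalizing H with
  | zero => exact ⟨H, hH, by simp⟩
  | succ n ih =>
    obtain ⟨K, hK, hHK⟩ := exists_contDiff_hadamard hH
    obtain ⟨R, hR, hKR⟩ := ih hK
    refine ⟨R, hR, fun x y => ?_⟩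
    have hcoeff (j : ℕ) : iteratedDeriv (j + 1) (fun t => H (x, t)) 0 / (j + 1).factorial =
        iteratedDeriv j (fun t => K (x, t)) 0 / j.factorial := by
      have hsplit : (fun t => H (x, t)) = fun t => H (x, 0) + t * K (x, t) := funext (hHK x)
      rw [hsplit, iteratedDeriv_const_add (Nat.succ_pos j),
        iteratedDeriv_succ_id_mul_zero (by fun_prop), Nat.factorial_succ]
      push_cast
      field_simp
    rw [Finset.sum_range_succ', hHK, hKR, mul_add, Finset.mul_sum]
    simp only [hcoeff, iteratedDeriv_zero, Nat.factorial_zero, Nat.cast_one, div_one, pow_zero,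
      mul_one]
    rw [show ∑ j ∈ Finset.range n, iteratedDeriv j (fun t => K (x, t)) 0 / j.factorial * y ^ (j + 1)
      = ∑ j ∈ Finset.range n, y * (iteratedDeriv j (fun t => K (x, t)) 0 / j.factorial * y ^ j)
      from Finset.sum_congr rfl fun j _ => by ring]
    ring

lemma exists_contDiff_taylor {f : ℝ → ℝ} (hf : ContDiff ℝ ∞ f) (n : ℕ) :
    ∃ r : ℝ → ℝ, ContDiff ℝ ∞ r ∧ ∀ x, f x =
      (∑ i ∈ Finset.range n, iteratedDeriv i f 0 / i.factorial * x ^ i) + x ^ n * r x := by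
  obtain ⟨R, hR, hfR⟩ := exists_contDiff_taylor_param (P := ℝ) (hf.comp contDiff_snd) n
  exact ⟨fun x => R (0, x), by fun_prop, hfR 0⟩

end Taylor

section CosineKernel

lemma hasTemperateGrowth_of_bounded_iteratedDeriv {F : Type*} [NormedAddCommGroup F]
    [NormedSpace ℝ F] {f : ℝ → F} (hf : ContDiff ℝ ∞ f)
    (hbound : ∀ n, ∃ C, ∀ x, ‖iteratedDeriv n f x‖ ≤ C) : f.HasTemperateGrowth := by
  refine ⟨hf, fun n => ?_⟩
  obtain ⟨C, hC⟩ := hbound n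
  refine ⟨0, C, fun x => ?_⟩
  rw [pow_zero, mul_one, norm_iteratedFDeriv_eq_norm_iteratedDeriv]
  exact hC x

lemma exists_contDiff_cos_sq : ∃ κ : ℝ → ℝ, ContDiff ℝ ∞ κ ∧ ∀ y, κ (y ^ 2) = Real.cos y := by
  let c : ℕ → ℝ := fun n => (-1) ^ n / (2 * n).factorial
  have hradius : (FormalMultilinearSeries.ofScalars ℝ c).radius = ⊤ := by
    refine FormalMultilinearSeries.radius_eq_top_of_summable_norm _ fun r =>
      (Real.summable_pow_div_factorial r).of_nonneg_of_le (fun n => by positivity) fun n => ?_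
    rw [FormalMultilinearSeries.ofScalars_norm]
    simp only [c, norm_div, norm_pow, norm_neg, norm_one, one_pow]
    rw [Real.norm_natCast, div_mul_eq_mul_div, one_mul]
    gcongr
    omega
  have hseries := (FormalMultilinearSeries.ofScalars ℝ c).hasFPowerSeriesOnBall
    (by rw [hradius]; exact ENNReal.coe_lt_top)
  refine ⟨(FormalMultilinearSeries.ofScalars ℝ c).sum, ?_, fun y => ?_⟩
  · have hanalytic := hseries.analyticOnNhd
    rw [hradius, Metric.eball_top] at hanalytic
    exact hanalytic.contDiff
  · refine (FormalMultilinearSeries.ofScalars_sum_eq c (y ^ 2)).trans ?_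
    rw [← (Real.hasSum_cos y).tsum_eq]
    refine tsum_congr fun n => ?_
    rw [smul_eq_mul, ← pow_mul]
    ring

lemma hasDerivAt_iteratedDeriv {f : ℝ → ℝ} (hf : ContDiff ℝ ∞ f) (n : ℕ) (x : ℝ) :
    HasDerivAt (iteratedDeriv n f) (iteratedDeriv (n + 1) f x) x := by
  rw [iteratedDeriv_succ]
  exact (hf.differentiable_iteratedDeriv n (by exact_mod_cast WithTop.coe_lt_top _) x).hasDerivAt

lemma hasDerivAt_comp_sq {f : ℝ → ℝ} {f' y : ℝ} (hf : HasDerivAt f f' (y ^ 2)) :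
    HasDerivAt (fun y => f (y ^ 2)) (f' * (2 * y)) y := by
  simpa [Function.comp_def] using HasDerivAt.comp (h := (· ^ 2)) y hf (hasDerivAt_pow 2 y)

variable {k : ℝ → ℝ}

lemma two_mul_deriv_sq_eq_neg_sin (hk : ContDiff ℝ ∞ k) (hcos : ∀ y, k (y ^ 2) = Real.cos y)
    (y : ℝ) : 2 * y * deriv k (y ^ 2) = -Real.sin y := by
  have hsq := hasDerivAt_comp_sq (hk.differentiable (by simp) (y ^ 2)).hasDerivAt
  rw [funext hcos] at hsq
  linarith [hsq.unique (Real.hasDerivAt_cos y)]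

lemma cosineKernel_ode_zero (hk : ContDiff ℝ ∞ k) (hcos : ∀ y, k (y ^ 2) = Real.cos y) (y : ℝ) :
    4 * y ^ 2 * iteratedDeriv 2 k (y ^ 2) + 2 * deriv k (y ^ 2) + k (y ^ 2) = 0 := by
  have hderiv : HasDerivAt (deriv k) (iteratedDeriv 2 k (y ^ 2)) (y ^ 2) := by
    simpa only [iteratedDeriv_one] using hasDerivAt_iteratedDeriv hk 1 (y ^ 2)
  have hmul : HasDerivAt (fun y => 2 * y * deriv k (y ^ 2))
      (2 * deriv k (y ^ 2) + 2 * y * (iteratedDeriv 2 k (y ^ 2) * (2 * y))) y := by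
    simpa using ((hasDerivAt_id y).const_mul 2).fun_mul (hasDerivAt_comp_sq hderiv)
  rw [funext (two_mul_deriv_sq_eq_neg_sin hk hcos)] at hmul
  linarith [hmul.unique (Real.hasDerivAt_sin y).fun_neg, hcos y]

lemma cosineKernel_ode (hk : ContDiff ℝ ∞ k) (hcos : ∀ y, k (y ^ 2) = Real.cos y) (n : ℕ)
    {v : ℝ} (hv : 0 < v) : 4 * v * iteratedDeriv (n + 2) k v +
      (4 * n + 2) * iteratedDeriv (n + 1) k v + iteratedDeriv n k v = 0 := by
  induction n generalizing v with
  | zero =>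
    have hzero := cosineKernel_ode_zero hk hcos √v
    rw [Real.sq_sqrt hv.le] at hzero
    simpa [iteratedDeriv_one] using hzero
  | succ n ih =>
    have hderiv := ((((hasDerivAt_id v).const_mul 4).fun_mul
      (hasDerivAt_iteratedDeriv hk (n + 2) v)).fun_add
      ((hasDerivAt_iteratedDeriv hk (n + 1) v).const_mul (4 * n + 2 : ℝ))).fun_add
      (hasDerivAt_iteratedDeriv hk n v)
    have hconst := hderiv.unique ((hasDerivAt_const v (0 : ℝ)).congr_of_eventuallyEq
      ((lt_mem_nhds hv).mono fun w hw => ih hw))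
    simp only [id] at hconst
    push_cast
    linarith

lemma exists_abs_iteratedDeriv_le_of_one_le (hk : ContDiff ℝ ∞ k)
    (hcos : ∀ y, k (y ^ 2) = Real.cos y) (n : ℕ) :
    ∃ C, ∀ v, 1 ≤ v → |iteratedDeriv n k v| ≤ C := by
  induction n using Nat.twoStepInduction with
  | zero =>
    refine ⟨1, fun v hv => ?_⟩
    rw [iteratedDeriv_zero, ← Real.sq_sqrt (zero_le_one.trans hv), hcos]
    exact Real.abs_cos_le_one _
  | one =>
    refine ⟨1, fun v hv => ?_⟩
    have hsin := two_mul_deriv_sq_eq_neg_sin hk hcos √v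
    rw [Real.sq_sqrt (zero_le_one.trans hv)] at hsin
    have hle := Real.abs_sin_le_one √v
    rw [← abs_neg, ← hsin, abs_mul, abs_of_nonneg (by positivity)] at hle
    rw [iteratedDeriv_one]
    nlinarith [abs_nonneg (deriv k v), Real.one_le_sqrt.2 hv]
  | more n ihn ihn' =>
    obtain ⟨C, hC⟩ := ihn
    obtain ⟨D, hD⟩ := ihn'
    refine ⟨(4 * n + 2) * D + C, fun v hv => ?_⟩
    have hode := cosineKernel_ode hk hcos n (zero_lt_one.trans_le hv)
    have hle : 4 * v * |iteratedDeriv (n + 2) k v| ≤ (4 * n + 2) * D + C := by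
      rw [← abs_of_pos (by linarith : 0 < 4 * v), ← abs_mul, ← neg_neg (_ * iteratedDeriv _ k v),
        ← (add_eq_zero_iff_eq_neg'.1 ((add_assoc _ _ _).symm.trans hode)), abs_neg]
      refine (abs_add_le _ _).trans (add_le_add ?_ (hC v hv))
      rw [abs_mul, abs_of_pos (by positivity)]
      gcongr
      exact hD v hv
    nlinarith [abs_nonneg (iteratedDeriv (n + 2) k v)]

lemma exists_hasTemperateGrowth_cos_sq :
    ∃ k : ℝ → ℝ, k.HasTemperateGrowth ∧ ∀ y, k (y ^ 2) = Real.cos y := by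
  obtain ⟨κ, hκ, hκcos⟩ := exists_contDiff_cos_sq
  -- On the negative half-line `κ` grows exponentially, so it is cut off there.
  let k : ℝ → ℝ := fun v => Real.smoothTransition (v + 2) * κ v
  have hk : ContDiff ℝ ∞ k :=
    (Real.smoothTransition.contDiff.comp (contDiff_id.add contDiff_const)).mul hκ
  have hcos (y : ℝ) : k (y ^ 2) = Real.cos y := by
    rw [← hκcos, ← one_mul (κ _), ← Real.smoothTransition.one_of_one_le (x := y ^ 2 + 2)
      (by nlinarith [sq_nonneg y])]
  have hzero {v : ℝ} (hv : v < -2) (n : ℕ) : iteratedDeriv n k v = 0 := by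
    have hk0 : k =ᶠ[𝓝 v] 0 := (gt_mem_nhds hv).mono fun w hw =>
      mul_eq_zero_of_left (Real.smoothTransition.zero_of_nonpos (by linarith)) _
    rw [hk0.iteratedDeriv_eq]
    simp
  refine ⟨k, hasTemperateGrowth_of_bounded_iteratedDeriv hk fun n => ?_, hcos⟩
  obtain ⟨C, hC⟩ := exists_abs_iteratedDeriv_le_of_one_le hk hcos n
  obtain ⟨D, hD⟩ := (isCompact_Icc (a := (-2 : ℝ)) (b := 1)).exists_bound_of_continuousOn
    (hk.continuous_iteratedDeriv n (by exact_mod_cast le_top)).continuousOn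
  refine ⟨max C D, fun v => ?_⟩
  rcases le_or_gt 1 v with hv | hv
  · exact (hC v hv).trans (le_max_left _ _)
  rcases lt_or_ge v (-2) with hv' | hv'
  · rw [hzero hv', norm_zero]
    exact ((abs_nonneg _).trans (hC 1 le_rfl)).trans (le_max_left _ _)
  · exact (hD v ⟨hv', hv.le⟩).trans (le_max_right _ _)

lemma hasTemperateGrowth_deriv (hk : k.HasTemperateGrowth) : (deriv k).HasTemperateGrowth := by
  refine ⟨contDiff_infty_iff_deriv.1 hk.1 |>.2, fun n => ?_⟩
  obtain ⟨m, C, hC⟩ := hk.2 (n + 1)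
  refine ⟨m, C, fun x => ?_⟩
  rw [norm_iteratedFDeriv_eq_norm_iteratedDeriv, ← iteratedDeriv_succ',
    ← norm_iteratedFDeriv_eq_norm_iteratedDeriv]
  exact hC x

lemma hasTemperateGrowth_cexp_mul_I :
    Function.HasTemperateGrowth fun θ : ℝ => Complex.exp (θ * Complex.I) := by
  have hiter (n : ℕ) (θ : ℝ) : iteratedDeriv n (fun θ : ℝ => Complex.exp (θ * Complex.I)) θ =
      Complex.I ^ n * Complex.exp (θ * Complex.I) := by
    induction n generalizing θ with
    | zero => simp
    | succ n ih =>
      rw [iteratedDeriv_succ, funext ih]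
      rw [((((hasDerivAt_id' θ).ofReal_comp.mul_const Complex.I).cexp).const_mul _).deriv,
        Complex.ofReal_one]
      ring
  refine hasTemperateGrowth_of_bounded_iteratedDeriv ?_ fun n => ⟨1, fun θ => ?_⟩
  · exact (Complex.ofRealCLM.contDiff.mul contDiff_const).cexp
  · rw [hiter, norm_mul, norm_pow, Complex.norm_I, one_pow, one_mul,
      Complex.norm_exp_ofReal_mul_I]

end CosineKernel

section EvenOddDecomposition

open MeasureTheory SchwartzMap FourierTransform

section SchwartzIntegral

variable {V : Type*} [NormedAddCommGroup V] [NormedSpace ℝ V] [MeasurableSpace V] [BorelSpace V]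
  [SecondCountableTopology V] {μ : Measure V} [μ.HasTemperateGrowth]
  {P W : Type} [NormedAddCommGroup P] [NormedSpace ℝ P] [NormedAddCommGroup W] [NormedSpace ℝ W]
  {Φ : W → ℂ} {L : V → P →L[ℝ] W}

lemma integrable_norm_mul_one_add_norm_pow (f : 𝓢(V, ℂ)) (hL : L.HasTemperateGrowth) (m : ℕ) :
    Integrable (fun ξ => ‖f ξ‖ * (1 + ‖L ξ‖) ^ m) μ := by
  obtain ⟨n, C, hC₀, hC⟩ := hL.norm_iteratedFDeriv_le_uniform 0
  have hbound (ξ : V) : 1 + ‖L ξ‖ ≤ (1 + C) * (1 + ‖ξ‖) ^ n := by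
    have hLξ := hC 0 le_rfl ξ
    rw [norm_iteratedFDeriv_zero] at hLξ
    have hone : 1 ≤ (1 + ‖ξ‖) ^ n := one_le_pow₀ (by linarith [norm_nonneg ξ])
    linarith
  have hint : Integrable (fun ξ => (1 + C) ^ m * (2 ^ (n * m - 1) *
      (‖ξ‖ ^ 0 * ‖f ξ‖ + ‖ξ‖ ^ (n * m) * ‖f ξ‖))) μ :=
    (((f.integrable_pow_mul μ 0).add (f.integrable_pow_mul μ (n * m))).const_mul _).const_mul _
  refine hint.mono' (Continuous.aestronglyMeasurable ?_) (.of_forall fun ξ => ?_)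
  · have := hL.1.continuous
    fun_prop
  · rw [Real.norm_of_nonneg (by positivity)]
    calc ‖f ξ‖ * (1 + ‖L ξ‖) ^ m ≤ ‖f ξ‖ * ((1 + C) ^ m * (1 + ‖ξ‖) ^ (n * m)) := by
          rw [pow_mul, ← mul_pow]
          gcongr
          exact hbound ξ
      _ ≤ ‖f ξ‖ * ((1 + C) ^ m * (2 ^ (n * m - 1) * (1 ^ (n * m) + ‖ξ‖ ^ (n * m)))) := by
          gcongr
          exact add_pow_le zero_le_one (norm_nonneg ξ) _
      _ = _ := by ring

lemma integrable_schwartz_mul_comp (f : 𝓢(V, ℂ)) (hΦ : Φ.HasTemperateGrowth)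
    (hL : L.HasTemperateGrowth) (p : P) : Integrable (fun ξ => f ξ * Φ (L ξ p)) μ := by
  have hcomp : Function.HasTemperateGrowth fun ξ => Φ (L ξ p) :=
    hΦ.comp ((ContinuousLinearMap.apply ℝ W p).hasTemperateGrowth.comp hL)
  refine (smulLeftCLM ℂ (fun ξ => Φ (L ξ p)) f).integrable.congr (.of_forall fun ξ => ?_)
  simp only [smulLeftCLM_apply_apply hcomp, smul_eq_mul, mul_comm]

lemma contDiff_integral_schwartz_mul_comp (f : 𝓢(V, ℂ)) (hΦ : Φ.HasTemperateGrowth)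
    (hL : L.HasTemperateGrowth) : ContDiff ℝ ∞ fun p => ∫ ξ, f ξ * Φ (L ξ p) ∂μ := by
  refine contDiff_integral_clm_comp (A := fun ξ => ContinuousLinearMap.mul ℝ ℂ (f ξ)) hΦ.1
    (Continuous.aestronglyMeasurable (by fun_prop)) hL.1.continuous.aestronglyMeasurable
    (fun m => ?_) fun n p => ?_
  · simpa only [ContinuousLinearMap.opNorm_mul_apply] using
      integrable_norm_mul_one_add_norm_pow f hL m
  · obtain ⟨m, C, hC₀, hC⟩ := hΦ.norm_iteratedFDeriv_le_uniform n
    refine ⟨m, C * (‖p‖ + 2) ^ m, Metric.ball p 1, Metric.ball_mem_nhds p one_pos,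
      .of_forall fun ξ q hq => (hC n le_rfl _).trans ?_⟩
    have hq' : ‖q‖ ≤ ‖p‖ + 1 := by
      linarith [norm_le_norm_add_norm_sub p q, mem_ball_iff_norm.1 hq, norm_sub_rev p q]
    rw [mul_assoc, ← mul_pow]
    gcongr
    nlinarith [(L ξ).le_opNorm_of_le hq', norm_nonneg (L ξ), norm_nonneg p]

end SchwartzIntegral

lemma cexp_add_mul_I_of_cos_sq {k : ℝ → ℝ} (hk : ContDiff ℝ ∞ k)
    (hcos : ∀ y, k (y ^ 2) = Real.cos y) (θ s : ℝ) :
    Complex.exp ((θ + s : ℝ) * Complex.I) = Complex.exp (θ * Complex.I) * k (s ^ 2) -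
      2 * s * Complex.I * (Complex.exp (θ * Complex.I) * deriv k (s ^ 2)) := by
  have hsin : (2 * s * deriv k (s ^ 2) : ℂ) = -Complex.sin s :=
    mod_cast two_mul_deriv_sq_eq_neg_sin hk hcos s
  rw [Complex.ofReal_add, add_mul, Complex.exp_add, Complex.exp_mul_I (s : ℂ), hcos,
    Complex.ofReal_cos]
  linear_combination (Complex.exp (θ * Complex.I) * Complex.I) * hsin

lemma hasTemperateGrowth_cexp_mul_ofReal {k : ℝ → ℝ} (hk : k.HasTemperateGrowth) :
    Function.HasTemperateGrowth fun p : ℝ × ℝ => Complex.exp (p.1 * Complex.I) * k p.2 :=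
  (hasTemperateGrowth_cexp_mul_I.comp (ContinuousLinearMap.fst ℝ ℝ ℝ).hasTemperateGrowth).mul
    (Function.Complex.hasTemperateGrowth_ofReal.comp
      (hk.comp (ContinuousLinearMap.snd ℝ ℝ ℝ).hasTemperateGrowth))

section InnerProductSpace

variable {V : Type} [NormedAddCommGroup V] [InnerProductSpace ℝ V]

/-- The linear map `(v, u) ↦ (2π⟪ξ, v⟫, (2π⟪ξ, e⟫)² u)`: the phase of the plane wave with
frequency `ξ` at `v`, and the square of its phase increment along `√u • e`. -/
def phaseMap (e ξ : V) : V × ℝ →L[ℝ] ℝ × ℝ :=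
  (2 * Real.pi) • sandwich (.inl ℝ ℝ ℝ) (.fst ℝ V ℝ) (innerSL ℝ ξ) +
    (2 * Real.pi * inner ℝ ξ e) ^ 2 • (ContinuousLinearMap.inr ℝ ℝ ℝ).comp (.snd ℝ V ℝ)

lemma phaseMap_apply (e ξ v : V) (u : ℝ) : phaseMap e ξ (v, u) =
    (2 * Real.pi * inner ℝ ξ v, (2 * Real.pi * inner ℝ ξ e) ^ 2 * u) := by
  simp [phaseMap, sandwich]

lemma hasTemperateGrowth_phaseMap (e : V) : (phaseMap e).HasTemperateGrowth := by
  have hlin :=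
    ((sandwich (.inl ℝ ℝ ℝ) (.fst ℝ V ℝ)).comp (innerSL ℝ (E := V))).hasTemperateGrowth
  have hsq : Function.HasTemperateGrowth fun ξ : V => (2 * Real.pi * inner ℝ ξ e) ^ 2 := by
    fun_prop
  exact ((Function.HasTemperateGrowth.const (2 * Real.pi)).smul hlin).add (hsq.smul (.const _))

variable [FiniteDimensional ℝ V] [MeasurableSpace V] [BorelSpace V]

-- Fourier inversion, each plane wave being split into its even and odd parts along `e`.
lemma exists_contDiff_even_odd_schwartz (f : 𝓢(V, ℂ)) (e : V) :
    ∃ E O : V × ℝ → ℂ, ContDiff ℝ ∞ E ∧ ContDiff ℝ ∞ O ∧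
      ∀ v (w : ℝ), f (v + w • e) = E (v, w ^ 2) + w * O (v, w ^ 2) := by
  obtain ⟨k, hk, hcos⟩ := exists_hasTemperateGrowth_cos_sq
  have hΦ := hasTemperateGrowth_cexp_mul_ofReal hk
  have hΦ' := hasTemperateGrowth_cexp_mul_ofReal (hasTemperateGrowth_deriv hk)
  have hL := hasTemperateGrowth_phaseMap e
  let m : V → ℂ := fun ξ => -(2 * (2 * Real.pi * inner ℝ ξ e : ℝ) * Complex.I)
  have hm : m.HasTemperateGrowth := by fun_prop
  refine ⟨_, _, contDiff_integral_schwartz_mul_comp (μ := volume) (𝓕 f) hΦ hL,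
    contDiff_integral_schwartz_mul_comp (μ := volume) (smulLeftCLM ℂ m (𝓕 f)) hΦ' hL,
    fun v w => ?_⟩
  have hinversion := congrFun
    (f.continuous.fourierInv_fourier_eq f.integrable (𝓕 f).integrable) (v + w • e)
  rw [Real.fourierInv_eq'] at hinversion
  rw [← hinversion, ← integral_const_mul, ← integral_add (integrable_schwartz_mul_comp _ hΦ hL _)
    ((integrable_schwartz_mul_comp _ hΦ' hL _).const_mul _)]
  refine integral_congr_ae (.of_forall fun ξ => ?_)
  have hphase : 2 * Real.pi * inner ℝ ξ (v + w • e) =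
      2 * Real.pi * inner ℝ ξ v + 2 * Real.pi * inner ℝ ξ e * w := by
    rw [inner_add_right, real_inner_smul_right]
    ring
  simp only [phaseMap_apply, smulLeftCLM_apply_apply hm, smul_eq_mul]
  rw [← mul_pow, hphase, cexp_add_mul_I_of_cos_sq hk.1 hcos, fourier_coe]
  push_cast [m]
  ring

end InnerProductSpace

theorem exists_contDiff_even_odd {V : Type} [NormedAddCommGroup V] [NormedSpace ℝ V]
    [FiniteDimensional ℝ V] {g : V → ℝ} (hg : ContDiff ℝ ∞ g) (hsupp : HasCompactSupport g)
    (e : V) : ∃ E O : V × ℝ → ℝ, ContDiff ℝ ∞ E ∧ ContDiff ℝ ∞ O ∧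
      ∀ v (w : ℝ), g (v + w • e) = E (v, w ^ 2) + w * O (v, w ^ 2) := by
  let T : V ≃L[ℝ] EuclideanSpace ℝ (Fin (Module.finrank ℝ V)) := toEuclidean
  have hgT : ContDiff ℝ ∞ fun z => (g (T.symm z) : ℂ) :=
    Complex.ofRealCLM.contDiff.comp (hg.comp T.symm.contDiff)
  have hsuppT : HasCompactSupport fun z => (g (T.symm z) : ℂ) :=
    (hsupp.comp_homeomorph T.symm.toHomeomorph).comp_left (g := Complex.ofReal) rfl
  obtain ⟨E, O, hE, hO, hEO⟩ := exists_contDiff_even_odd_schwartz (hsuppT.toSchwartzMap hgT) (T e)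
  have hTfst : ContDiff ℝ ∞ fun p : V × ℝ => (T p.1, p.2) :=
    (T.contDiff.comp contDiff_fst).prodMk contDiff_snd
  refine ⟨fun p => (E (T p.1, p.2)).re, fun p => (O (T p.1, p.2)).re,
    Complex.reCLM.contDiff.comp (hE.comp hTfst), Complex.reCLM.contDiff.comp (hO.comp hTfst),
    fun v w => ?_⟩
  have hre := congrArg Complex.re (hEO (T v) w)
  rw [← map_smul, ← map_add] at hre
  simpa using hre

end EvenOddDecomposition

section Preparation

/-- The partial derivative of `F : P × ℝ → ℝ` in the last variable. -/
def partialSnd {P : Type*} (F : P × ℝ → ℝ) : P × ℝ → ℝ :=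
  fun p => deriv (fun t => F (p.1, t)) p.2

lemma contDiff_partialSnd {P : Type*} [NormedAddCommGroup P] [NormedSpace ℝ P] {F : P × ℝ → ℝ}
    (hF : ContDiff ℝ ∞ F) : ContDiff ℝ ∞ (partialSnd F) := by
  have hslice : partialSnd F = fun p => fderiv ℝ F p (0, 1) := funext fun p =>
    (HasFDerivAt.comp_hasDerivAt p.2 (hF.differentiable (by simp) (p.1, p.2)).hasFDerivAt
      ((hasDerivAt_const p.2 p.1).prodMk (hasDerivAt_id p.2))).deriv
  rw [hslice]
  exact (hF.fderiv_right (m := ∞) (by simp)).clm_apply contDiff_const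

lemma partialSnd_eq_pdy {G : ℝ × ℝ → ℝ} (hG : ContDiff ℝ ∞ G) : partialSnd G = pdy G :=
  funext fun p => (hasDerivAt_pdy hG p.1 p.2).deriv

lemma exists_contDiff_taylor_two {P : Type} [NormedAddCommGroup P] [NormedSpace ℝ P]
    [FiniteDimensional ℝ P] {F : P × ℝ → ℝ} (hF : ContDiff ℝ ∞ F) :
    ∃ R : (P × ℝ) × ℝ → ℝ, ContDiff ℝ ∞ R ∧ ∀ p u v,
      F (p, u + v) = F (p, u) + v * partialSnd F (p, u) + v ^ 2 * R ((p, u), v) := by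
  have hH : ContDiff ℝ ∞ fun q : (P × ℝ) × ℝ => F (q.1.1, q.1.2 + q.2) := by fun_prop
  obtain ⟨R, hR, hFR⟩ := exists_contDiff_taylor_param hH 2
  refine ⟨R, hR, fun p u v => ?_⟩
  have hshift : deriv (fun t => F (p, u + t)) 0 = partialSnd F (p, u) := by
    rw [deriv_comp_const_add (fun t => F (p, t)), add_zero, partialSnd]
  simpa [Finset.sum_range_succ, hshift, mul_comm v] using hFR (p, u) v

lemma deriv_even_add_odd {e o : ℝ → ℝ} (he : ContDiff ℝ ∞ e) (ho : ContDiff ℝ ∞ o) :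
    deriv (fun w => e (w ^ 2) + w * o (w ^ 2)) = fun w =>
      (o (w ^ 2) + 2 * w ^ 2 * deriv o (w ^ 2)) + w * (2 * deriv e (w ^ 2)) := by
  funext w
  have he' := hasDerivAt_comp_sq (y := w) (he.differentiable (by simp) _).hasDerivAt
  have ho' := hasDerivAt_comp_sq (y := w) (ho.differentiable (by simp) _).hasDerivAt
  refine (he'.fun_add ((hasDerivAt_id' w).fun_mul ho')).deriv.trans ?_
  ring

lemma iteratedDeriv_even_add_odd_zero {e o : ℝ → ℝ} (he : ContDiff ℝ ∞ e) (ho : ContDiff ℝ ∞ o) :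
    iteratedDeriv 1 (fun w => e (w ^ 2) + w * o (w ^ 2)) 0 = o 0 ∧
    iteratedDeriv 2 (fun w => e (w ^ 2) + w * o (w ^ 2)) 0 = 2 * deriv e 0 ∧
    iteratedDeriv 3 (fun w => e (w ^ 2) + w * o (w ^ 2)) 0 = 6 * deriv o 0 := by
  have hderiv {f : ℝ → ℝ} (hf : ContDiff ℝ ∞ f) : ContDiff ℝ ∞ (deriv f) :=
    (contDiff_infty_iff_deriv.1 hf).2
  have hlin {f f' : ℝ → ℝ} (hf : ContDiff ℝ ∞ f) (hf' : ContDiff ℝ ∞ f') :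
      ContDiff ℝ ∞ fun u => f u + 2 * u * f' u := by fun_prop
  have he₁ := hlin ho (hderiv ho)
  have ho₁ : ContDiff ℝ ∞ fun u => 2 * deriv e u := contDiff_const.mul (hderiv he)
  have he₁' : deriv (fun u => o u + 2 * u * deriv o u) 0 = 3 * deriv o 0 := by
    have hsum := ((ho.differentiable (by simp) 0).hasDerivAt).fun_add (((hasDerivAt_id'
      (0 : ℝ)).const_mul 2).fun_mul ((hderiv ho).differentiable (by simp) 0).hasDerivAt)
    refine hsum.deriv.trans ?_
    ring
  simp only [iteratedDeriv_succ, iteratedDeriv_zero, deriv_even_add_odd he ho,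
    deriv_even_add_odd he₁ ho₁,
    deriv_even_add_odd (hlin ho₁ (hderiv ho₁)) (contDiff_const.mul (hderiv he₁))]
  refine ⟨by simp, by simp, ?_⟩
  simp only [ne_eq, OfNat.ofNat_ne_zero, not_false_eq_true, zero_pow, he₁']
  ring

lemma hasDerivAt_id_mul_zero {c : ℝ → ℝ} (hc : ContinuousAt c 0) :
    HasDerivAt (fun u => u * c u) (c 0) 0 := by
  rw [hasDerivAt_iff_tendsto_slope]
  refine (hc.mono_left nhdsWithin_le_nhds).congr' ?_
  filter_upwards [self_mem_nhdsWithin] with u hu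
  have hu : u ≠ 0 := hu
  simp [slope_def_field, hu]

variable {g : ℝ × ℝ → ℝ} {E O : (ℝ × ℝ) × ℝ → ℝ}

lemma even_odd_apply_zero (hg : ContDiff ℝ ∞ g) (hE : ContDiff ℝ ∞ E) (hO : ContDiff ℝ ∞ O)
    (hEO : ∀ p w, g (p.1, p.2 + w) = E (p, w ^ 2) + w * O (p, w ^ 2)) (p : ℝ × ℝ) :
    O (p, 0) = pdy g p ∧ 2 * partialSnd E (p, 0) = pdy (pdy g) p ∧
      6 * partialSnd O (p, 0) = pdy (pdy (pdy g)) p := by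
  have hslice (n : ℕ) : iteratedDeriv n (fun w => E (p, w ^ 2) + w * O (p, w ^ 2)) 0 =
      (pdy^[n] g) p := by
    simp only [← hEO]
    rw [iteratedDeriv_comp_const_add n (fun t => g (p.1, t)), iteratedDeriv_pdy hg]
    simp
  have hderiv := iteratedDeriv_even_add_odd_zero (e := fun u => E (p, u)) (o := fun u => O (p, u))
    (by fun_prop) (by fun_prop)
  simp only [hslice] at hderiv
  exact ⟨hderiv.1.symm, hderiv.2.1.symm, hderiv.2.2.symm⟩

/-- The map germ `(x, y) ↦ (x, g (x, y))` at the origin has corank one, and `g (0, ·)` vanishes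
to order exactly three. -/
structure IsCuspidal (g : ℝ × ℝ → ℝ) : Prop where
  contDiff : ContDiff ℝ ∞ g
  map_zero : g 0 = 0
  pdy_zero : pdy g 0 = 0
  pdy_pdy_zero : pdy (pdy g) 0 = 0
  pdy_pdy_pdy_zero : pdy (pdy (pdy g)) 0 ≠ 0

lemma hasDerivAt_odd_along_curve (hg : IsCuspidal g) (hE : ContDiff ℝ ∞ E) (hO : ContDiff ℝ ∞ O)
    (hEO : ∀ p w, g (p.1, p.2 + w) = E (p, w ^ 2) + w * O (p, w ^ 2)) {σ : ℝ → ℝ}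
    (hσ : ContDiff ℝ ∞ σ) (hσ₀ : σ 0 = 0) :
    HasDerivAt (fun u => O ((0, σ u), u)) (partialSnd O 0) 0 := by
  have hG : ContDiff ℝ ∞ fun q : ℝ × ℝ => O ((0, q.1), q.2) := by fun_prop
  have hGx : pdx (fun q : ℝ × ℝ => O ((0, q.1), q.2)) 0 = 0 := by
    have hslice : (fun t => O ((0, t), 0)) = fun t => pdy g (0, t) :=
      funext fun t => (even_odd_apply_zero hg.contDiff hE hO hEO (0, t)).1
    refine ((hasDerivAt_pdx hG 0 0).unique ?_).trans hg.pdy_pdy_zero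
    exact hslice ▸ hasDerivAt_pdy (contDiff_pdy hg.contDiff) 0 0
  have hGy : pdy (fun q : ℝ × ℝ => O ((0, q.1), q.2)) 0 = partialSnd O 0 :=
    (hasDerivAt_pdy hG 0 0).deriv.symm
  have hcurve := hasDerivAt_comp_prodMk hG (hσ.differentiable (by simp) 0).hasDerivAt
    (hasDerivAt_id' 0)
  simpa only [hσ₀, Prod.mk_zero_zero, hGx, hGy, mul_zero, zero_add, one_mul] using hcurve

lemma exists_contDiff_double_root (hg : IsCuspidal g) (hE : ContDiff ℝ ∞ E) (hO : ContDiff ℝ ∞ O)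
    (hEO : ∀ p w, g (p.1, p.2 + w) = E (p, w ^ 2) + w * O (p, w ^ 2)) :
    ∃ s u : ℝ → ℝ, ContDiff ℝ ∞ s ∧ ContDiff ℝ ∞ u ∧ s 0 = 0 ∧ u 0 = 0 ∧ ∀ᶠ x in 𝓝 0,
      partialSnd E ((x, s x), u x) = 0 ∧
        O ((x, s x), u x) + u x * (2 * partialSnd O ((x, s x), u x)) = 0 := by
  have hE' := contDiff_partialSnd hE
  have hO' := contDiff_partialSnd hO
  have hjet := even_odd_apply_zero hg.contDiff hE hO hEO
  obtain ⟨hO₀, hE'₀, hO'₀⟩ : O 0 = 0 ∧ partialSnd E 0 = 0 ∧ partialSnd O 0 ≠ 0 := by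
    obtain ⟨h₁, h₂, h₃⟩ := hjet 0
    rw [Prod.mk_zero_zero] at h₁ h₂ h₃
    exact ⟨h₁.trans hg.pdy_zero, by linarith [hg.pdy_pdy_zero],
      fun h => hg.pdy_pdy_pdy_zero (by rw [← h₃, h, mul_zero])⟩
  have hE's : HasDerivAt (fun s => partialSnd E ((0, s), 0)) (pdy (pdy (pdy g)) 0 / 2) 0 := by
    have hslice : (fun s => partialSnd E ((0, s), 0)) = fun s => pdy (pdy g) (0, s) / 2 :=
      funext fun s => eq_div_of_mul_eq two_ne_zero ((mul_comm _ _).trans (hjet (0, s)).2.1)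
    exact hslice ▸ (hasDerivAt_pdy (contDiff_pdy (contDiff_pdy hg.contDiff)) 0 0).div_const 2
  obtain ⟨s, hs, hs₀, hs_root⟩ := exists_contDiff_implicit_real (E := ℝ × ℝ) (a := 0)
    (H := fun q => partialSnd E ((q.1.1, q.2), q.1.2)) (by fun_prop)
    (by simpa only [Prod.mk_zero_zero, Prod.fst_zero, Prod.snd_zero] using hE'₀) hE's
    (div_ne_zero hg.pdy_pdy_pdy_zero two_ne_zero)
  have hO's : HasDerivAt (fun u => O ((0, s (0, u)), u) + u * (2 * partialSnd O ((0, s (0, u)), u)))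
      (partialSnd O 0 + 2 * partialSnd O 0) 0 := by
    have hfirst := hasDerivAt_odd_along_curve hg hE hO hEO
      (σ := fun u => s (0, u)) (by fun_prop) hs₀
    have hcoeff : ContDiff ℝ ∞ fun u => 2 * partialSnd O ((0, s (0, u)), u) := by fun_prop
    have hsecond := hasDerivAt_id_mul_zero hcoeff.continuous.continuousAt
    simpa only [Prod.mk_zero_zero, hs₀] using hfirst.fun_add hsecond
  obtain ⟨u, hu, hu₀, hu_root⟩ := exists_contDiff_implicit_real (a := 0)
    (H := fun q => O ((q.1, s q), q.2) + q.2 * (2 * partialSnd O ((q.1, s q), q.2)))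
    (by fun_prop) (by simp [Prod.mk_zero_zero, hs₀, hO₀]) hO's (by contrapose! hO'₀; linarith)
  have hcurve : Tendsto (fun x => (x, u x)) (𝓝 0) (𝓝 0) := by
    simpa [hu₀, Prod.mk_zero_zero] using (by fun_prop : Continuous fun x => (x, u x)).tendsto 0
  exact ⟨fun x => s (x, u x), u, by fun_prop, hu, by simp [Prod.mk_zero_zero, hu₀, hs₀], hu₀,
    (hcurve.eventually hs_root).and hu_root⟩

lemma exists_square_completion (hg : IsCuspidal g) (hE : ContDiff ℝ ∞ E) (hO : ContDiff ℝ ∞ O)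
    (hEO : ∀ p w, g (p.1, p.2 + w) = E (p, w ^ 2) + w * O (p, w ^ 2)) :
    ∃ (s t e q : ℝ → ℝ) (R : ℝ × ℝ → ℝ), ContDiff ℝ ∞ s ∧ ContDiff ℝ ∞ t ∧ ContDiff ℝ ∞ e ∧
      ContDiff ℝ ∞ q ∧ ContDiff ℝ ∞ R ∧ s 0 = 0 ∧ t 0 = 0 ∧ q 0 ≠ 0 ∧
      ∀ᶠ x in 𝓝 0, ∀ w, g (x, s x + w) =
        e x + q x * (w ^ 3 + 3 * t x * w) + (w ^ 2 + t x) ^ 2 * R (x, w) := by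
  obtain ⟨s, u, hs, hu, hs₀, hu₀, hroot⟩ := exists_contDiff_double_root hg hE hO hEO
  obtain ⟨R₁, hR₁, hER⟩ := exists_contDiff_taylor_two hE
  obtain ⟨R₂, hR₂, hOR⟩ := exists_contDiff_taylor_two hO
  have hO' := contDiff_partialSnd hO
  refine ⟨s, fun x => -u x, fun x => E ((x, s x), u x), fun x => partialSnd O ((x, s x), u x),
    fun p => R₁ (((p.1, s p.1), u p.1), p.2 ^ 2 - u p.1) +
      p.2 * R₂ (((p.1, s p.1), u p.1), p.2 ^ 2 - u p.1),
    hs, hu.neg, by fun_prop, by fun_prop, by fun_prop, hs₀, by simp [hu₀], ?_, ?_⟩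
  · intro hq
    have hjet := (even_odd_apply_zero hg.contDiff hE hO hEO 0).2.2
    simp only [hs₀, hu₀, Prod.mk_zero_zero] at hq
    rw [Prod.mk_zero_zero, hq, mul_zero] at hjet
    exact hg.pdy_pdy_pdy_zero hjet.symm
  · filter_upwards [hroot] with x ⟨hEx, hOx⟩ w
    have hE₂ := hER (x, s x) (u x) (w ^ 2 - u x)
    have hO₂ := hOR (x, s x) (u x) (w ^ 2 - u x)
    rw [add_sub_cancel] at hE₂ hO₂
    rw [hEO (x, s x) w, hE₂, hO₂, hEx]
    linear_combination w * hOx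

lemma exists_cubic_absorption {t q : ℝ → ℝ} {R : ℝ × ℝ → ℝ} (ht : ContDiff ℝ ∞ t)
    (hq : ContDiff ℝ ∞ q) (hR : ContDiff ℝ ∞ R) (ht₀ : t 0 = 0) (hq₀ : q 0 ≠ 0) :
    ∃ Y : ℝ × ℝ → ℝ, ContDiff ℝ ∞ Y ∧ Y 0 = 0 ∧ pdy Y 0 ≠ 0 ∧ ∀ᶠ p in 𝓝 0,
      q p.1 * (p.2 ^ 3 + 3 * t p.1 * p.2) + (p.2 ^ 2 + t p.1) ^ 2 * R p =
        q p.1 * (Y p ^ 3 + 3 * t p.1 * Y p) := by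
  have hd : HasDerivAt (fun S => q 0 * (3 * S + 3 * 0 * S ^ 2 + (0 ^ 2 + t 0) * S ^ 3) - R 0)
      (3 * q 0) (R 0 / (3 * q 0)) := by
    simp only [ht₀]
    refine ((((hasDerivAt_id' _).const_mul (3 * q 0)).sub_const (R 0)).congr_deriv
      (mul_one _)).congr_of_eventuallyEq (Eventually.of_forall fun S => ?_)
    ring
  have hbase : q 0 * (3 * (R 0 / (3 * q 0))) = R 0 := by field_simp
  obtain ⟨S, hS, -, hroot⟩ := exists_contDiff_implicit_real (E := ℝ × ℝ) (a := 0)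
    (H := fun p => q p.1.1 * (3 * p.2 + 3 * p.1.2 * p.2 ^ 2 + (p.1.2 ^ 2 + t p.1.1) * p.2 ^ 3) -
      R p.1) (by fun_prop) (by simp [ht₀, hbase]) hd (mul_ne_zero three_ne_zero hq₀)
  have hY : ContDiff ℝ ∞ fun p : ℝ × ℝ => p.2 + (p.2 ^ 2 + t p.1) * S p := by fun_prop
  have hY' : pdy (fun p : ℝ × ℝ => p.2 + (p.2 ^ 2 + t p.1) * S p) 0 = 1 := by
    have hsq : HasDerivAt (fun w : ℝ => w ^ 2 + t 0) 0 0 := by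
      simpa using (hasDerivAt_pow 2 (0 : ℝ)).add_const (t 0)
    refine (hasDerivAt_pdy hY 0 0).unique
      (((hasDerivAt_id' 0).fun_add (hsq.fun_mul (hasDerivAt_pdy hS 0 0))).congr_deriv ?_)
    simp [ht₀]
  refine ⟨_, hY, by simp [ht₀], hY' ▸ one_ne_zero, ?_⟩
  filter_upwards [hroot] with p hp
  linear_combination (-(p.2 ^ 2 + t p.1) ^ 2) * hp

/-- The one-parameter family of cubics `y³ + a(x) y`, the versal unfolding of `y³` pulled back
along `a`. -/
def cubicFamily (a : ℝ → ℝ) : ℝ × ℝ → ℝ := fun p => p.2 ^ 3 + a p.1 * p.2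

lemma tendsto_prodMk_fst {h : ℝ × ℝ → ℝ} (hh : ContDiff ℝ ∞ h) (h₀ : h 0 = 0) :
    Tendsto (fun p => (p.1, h p)) (𝓝 0) (𝓝 0) := by
  simpa [h₀, Prod.mk_zero_zero] using (continuous_fst.prodMk hh.continuous).tendsto 0

lemma contDiff_cubicFamily {a : ℝ → ℝ} (ha : ContDiff ℝ ∞ a) : ContDiff ℝ ∞ (cubicFamily a) := by
  unfold cubicFamily
  fun_prop

lemma cubicFamily_zero (a : ℝ → ℝ) : cubicFamily a 0 = 0 := by simp [cubicFamily]

lemma IsCuspidal.exists_aEquiv_cubicFamily_of_hasCompactSupport (hg : IsCuspidal g)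
    (hsupp : HasCompactSupport g) : ∃ a, ContDiff ℝ ∞ a ∧ a 0 = 0 ∧
      AEquiv (fun p => (p.1, g p)) (fun p => (p.1, cubicFamily a p)) := by
  obtain ⟨E, O, hE, hO, hEO⟩ := exists_contDiff_even_odd hg.contDiff hsupp (0, 1)
  obtain ⟨s, t, e, q, R, hs, ht, he, hq, hR, hs₀, ht₀, hq₀, hgs⟩ :=
    exists_square_completion hg hE hO fun p w => by simpa [Prod.add_def] using hEO p w
  obtain ⟨Y, hY, hY₀, hY', hqY⟩ := exists_cubic_absorption ht hq hR ht₀ hq₀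
  have he₀ : e 0 = 0 := by
    simpa [hs₀, ht₀, hg.map_zero, Prod.mk_zero_zero] using (hgs.self_of_nhds 0).symm
  have hfiber {ξ η : ℝ → ℝ} (hξ : ContDiff ℝ ∞ ξ) (hη : ContDiff ℝ ∞ η) (hξ₀ : ξ 0 = 0)
      (hη₀ : η 0 ≠ 0) : IsDiffeoGerm fun p : ℝ × ℝ => (p.1, ξ p.1 + η p.1 * p.2) := by
    have hh : ContDiff ℝ ∞ fun p : ℝ × ℝ => ξ p.1 + η p.1 * p.2 := by fun_prop
    refine .prodMk_fst contDiff_id rfl (by simp) hh (by simp [hξ₀]) ?_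
    rwa [← Prod.mk_zero_zero, (hasDerivAt_pdy hh 0 0).unique
      (((hasDerivAt_id' 0).const_mul (η 0)).const_add (ξ 0)), mul_one]
  have ha : ContDiff ℝ ∞ fun x => 3 * t x := by fun_prop
  refine ⟨fun x => 3 * t x, ha, by simp [ht₀], AEquiv.of_eventually_eq
    (hfiber hs contDiff_const hs₀ one_ne_zero) (hfiber he hq he₀ hq₀)
    (.prodMk_fst contDiff_id rfl (by simp) hY hY₀ hY')
    (tendsto_prodMk_fst (contDiff_cubicFamily ha) (cubicFamily_zero _)) ?_⟩
  filter_upwards [(continuous_fst.tendsto (0 : ℝ × ℝ)).eventually hgs, hqY] with p hgp hp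
  simp only [id_eq, one_mul, Prod.mk.injEq, true_and, hgp, cubicFamily]
  rw [add_assoc, hp]

lemma pdy_congr {h : ℝ × ℝ → ℝ} {p : ℝ × ℝ} (hgh : g =ᶠ[𝓝 p] h) : pdy g =ᶠ[𝓝 p] pdy h :=
  hgh.fderiv.fun_comp (· (0, 1))

lemma IsCuspidal.congr {h : ℝ × ℝ → ℝ} (hg : IsCuspidal g) (hh : ContDiff ℝ ∞ h)
    (hgh : g =ᶠ[𝓝 0] h) : IsCuspidal h where
  contDiff := hh
  map_zero := hgh.eq_of_nhds ▸ hg.map_zero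
  pdy_zero := (pdy_congr hgh).eq_of_nhds ▸ hg.pdy_zero
  pdy_pdy_zero := (pdy_congr (pdy_congr hgh)).eq_of_nhds ▸ hg.pdy_pdy_zero
  pdy_pdy_pdy_zero :=
    (pdy_congr (pdy_congr (pdy_congr hgh))).eq_of_nhds ▸ hg.pdy_pdy_pdy_zero

theorem IsCuspidal.exists_aEquiv_cubicFamily (hg : IsCuspidal g) : ∃ a, ContDiff ℝ ∞ a ∧ a 0 = 0 ∧
    AEquiv (fun p => (p.1, g p)) (fun p => (p.1, cubicFamily a p)) := by
  let χ : ContDiffBump (0 : ℝ × ℝ) := ⟨1, 2, one_pos, one_lt_two⟩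
  have hχg : (fun p => χ p * g p) =ᶠ[𝓝 0] g := by
    filter_upwards [χ.eventuallyEq_one] with p hp
    rw [hp, Pi.one_apply, one_mul]
  obtain ⟨a, ha, ha₀, hequiv⟩ :=
    (hg.congr (χ.contDiff.mul hg.contDiff) hχg.symm).exists_aEquiv_cubicFamily_of_hasCompactSupport
      χ.hasCompactSupport.mul_right
  refine ⟨a, ha, ha₀, AEquiv.trans (AEquiv.of_eventually_eq .id .id .id ?_ ?_) hequiv⟩
  · exact tendsto_prodMk_fst (χ.contDiff.mul hg.contDiff) (by simp [hg.map_zero])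
  · filter_upwards [hχg] with p hp
    rw [hp]

end Preparation

section CuspContact

variable {g h A B a b : ℝ × ℝ → ℝ}

lemma pdy_comp_prodMk (hg : ContDiff ℝ ∞ g) (ha : ContDiff ℝ ∞ a) (hb : ContDiff ℝ ∞ b) :
    pdy (fun p => g (a p, b p)) = fun p =>
      pdy a p * pdx g (a p, b p) + pdy b p * pdy g (a p, b p) :=
  funext fun p => (hasDerivAt_pdy (by fun_prop) p.1 p.2).unique
    (hasDerivAt_comp_prodMk hg (hasDerivAt_pdy ha p.1 p.2) (hasDerivAt_pdy hb p.1 p.2))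

lemma pdy_comp_prodMk_fst (hA : ContDiff ℝ ∞ A) (hh : ContDiff ℝ ∞ h) :
    pdy (fun p => A (p.1, h p)) = fun p => pdy A (p.1, h p) * pdy h p :=
  funext fun p => ((hasDerivAt_pdy (by fun_prop) p.1 p.2).unique (hasDerivAt_comp_prodMk hA
    (b := fun t => h (p.1, t)) (hasDerivAt_const p.2 p.1) (hasDerivAt_pdy hh p.1 p.2))).trans
      (by ring)

lemma pdy_mul (ha : ContDiff ℝ ∞ a) (hb : ContDiff ℝ ∞ b) :
    pdy (fun p => a p * b p) = fun p => pdy a p * b p + a p * pdy b p :=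
  funext fun p => (hasDerivAt_pdy (by fun_prop) p.1 p.2).unique
    ((hasDerivAt_pdy ha p.1 p.2).mul (hasDerivAt_pdy hb p.1 p.2))

lemma exists_pdy_comp_eq_mul (hg : ContDiff ℝ ∞ g) (hh : ContDiff ℝ ∞ h) (hA : ContDiff ℝ ∞ A)
    (hB : ContDiff ℝ ∞ B) (ha : ContDiff ℝ ∞ a) (hb : ContDiff ℝ ∞ b)
    (haA : ∀ᶠ p in 𝓝 0, a p = A (p.1, h p))
    (hgB : ∀ᶠ p in 𝓝 0, g (a p, b p) = B (p.1, h p)) :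
    ∃ J K, ContDiff ℝ ∞ J ∧ ContDiff ℝ ∞ K ∧ (∀ᶠ p in 𝓝 0, pdy a p = J p * pdy h p) ∧
      ∀ᶠ p in 𝓝 0, pdy b p * pdy g (a p, b p) = K p * pdy h p := by
  have hA' := contDiff_pdy hA
  have hB' := contDiff_pdy hB
  have hgx := contDiff_pdx hg
  have haA' := pdy_congr haA
  have hgB' := pdy_congr hgB
  rw [pdy_comp_prodMk_fst hA hh] at haA'
  rw [pdy_comp_prodMk hg ha hb, pdy_comp_prodMk_fst hB hh] at hgB'
  refine ⟨fun p => pdy A (p.1, h p),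
    fun p => pdy B (p.1, h p) - pdx g (a p, b p) * pdy A (p.1, h p),
    by fun_prop, by fun_prop, haA', ?_⟩
  filter_upwards [haA', hgB'] with p hap hgp
  linear_combination hgp - pdx g (a p, b p) * hap

lemma pdy_pdy_comp_eq {J K : ℝ × ℝ → ℝ} (hg : ContDiff ℝ ∞ g) (hh : ContDiff ℝ ∞ h)
    (hK : ContDiff ℝ ∞ K) (ha : ContDiff ℝ ∞ a) (hb : ContDiff ℝ ∞ b)
    (hJ : ∀ᶠ p in 𝓝 0, pdy a p = J p * pdy h p)
    (hgK : ∀ᶠ p in 𝓝 0, pdy b p * pdy g (a p, b p) = K p * pdy h p) :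
    ∀ᶠ p in 𝓝 0, pdy b p ^ 2 * pdy (pdy g) (a p, b p) =
      (pdy K p - J p * pdx (pdy g) (a p, b p) * pdy b p) * pdy h p + K p * pdy (pdy h) p -
        pdy (pdy b) p * pdy g (a p, b p) := by
  have hg' := contDiff_pdy hg
  have hgK' := pdy_congr hgK
  rw [pdy_mul (contDiff_pdy hb) (by fun_prop), pdy_mul hK (contDiff_pdy hh),
    pdy_comp_prodMk hg' ha hb] at hgK'
  filter_upwards [hJ, hgK'] with p hJp hp
  linear_combination hp - pdx (pdy g) (a p, b p) * pdy b p * hJp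

lemma isBigO_continuousAt_mul {c z f : ℝ → ℝ} (hc : ContinuousAt c 0) (hz : z =O[𝓝 0] f) :
    (fun τ => c τ * z τ) =O[𝓝 0] f := by
  simpa using (hc.isBigO_one ℝ).mul hz

lemma isBigO_of_continuousAt_mul {c z f : ℝ → ℝ} (hc : ContinuousAt c 0) (hc₀ : c 0 ≠ 0)
    (hz : (fun τ => c τ * z τ) =O[𝓝 0] f) : z =O[𝓝 0] f := by
  refine (isBigO_continuousAt_mul (hc.inv₀ hc₀) hz).congr' ?_ .rfl
  filter_upwards [hc.eventually_ne hc₀] with τ hτ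
  exact inv_mul_cancel_left₀ hτ _

/-- Some regular curve germ at the origin has contact of order at least `k` with both `pdy g = 0`
and `pdy (pdy g) = 0`, the equations of the cusps of `(x, y) ↦ (x, g (x, y))`. -/
def HasCuspContact (g : ℝ × ℝ → ℝ) (k : ℕ) : Prop :=
  ∃ δ : ℝ → ℝ × ℝ, ContDiff ℝ ∞ δ ∧ δ 0 = 0 ∧ deriv δ 0 ≠ 0 ∧
    (fun τ => pdy g (δ τ)) =O[𝓝 0] (· ^ k) ∧ (fun τ => pdy (pdy g) (δ τ)) =O[𝓝 0] (· ^ k)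

lemma IsDiffeoGerm.pdy_snd_ne_zero {φ : ℝ × ℝ → ℝ × ℝ} (hφ : IsDiffeoGerm φ)
    (h₀ : pdy (fun p => (φ p).1) 0 = 0) : pdy (fun p => (φ p).2) 0 ≠ 0 := by
  intro h₁
  have hd := (hφ.contDiff.differentiable (by simp) 0).hasFDerivAt
  have hker : fderiv ℝ φ 0 (0, 1) = 0 :=
    Prod.ext ((congrArg (· (0, 1)) hd.fst.fderiv).symm.trans h₀)
      ((congrArg (· (0, 1)) hd.snd.fderiv).symm.trans h₁)
  simpa using hφ.bijective_fderiv.injective (hker.trans (_root_.map_zero _).symm)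

lemma IsDiffeoGerm.deriv_comp_ne_zero {φ : ℝ × ℝ → ℝ × ℝ} {δ : ℝ → ℝ × ℝ} (hφ : IsDiffeoGerm φ)
    (hδ : ContDiff ℝ ∞ δ) (hδ₀ : δ 0 = 0) (hδ' : deriv δ 0 ≠ 0) :
    deriv (fun τ => φ (δ τ)) 0 ≠ 0 := by
  have hchain : deriv (fun τ => φ (δ τ)) 0 = fderiv ℝ φ (δ 0) (deriv δ 0) :=
    fderiv_comp_deriv 0 (hφ.contDiff.differentiable (by simp) _) (hδ.differentiable (by simp) _)
  rw [hchain, hδ₀]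
  exact fun h => hδ' (hφ.bijective_fderiv.injective (h.trans (_root_.map_zero _).symm))

lemma isBigO_along_curve {J K : ℝ × ℝ → ℝ} {δ : ℝ → ℝ × ℝ} {k : ℕ} (hg : ContDiff ℝ ∞ g)
    (hh : ContDiff ℝ ∞ h) (hJ : ContDiff ℝ ∞ J) (hK : ContDiff ℝ ∞ K) (ha : ContDiff ℝ ∞ a)
    (hb : ContDiff ℝ ∞ b) (hb' : pdy b 0 ≠ 0)
    (hJa : ∀ᶠ p in 𝓝 0, pdy a p = J p * pdy h p)
    (hKg : ∀ᶠ p in 𝓝 0, pdy b p * pdy g (a p, b p) = K p * pdy h p)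
    (hδ : ContDiff ℝ ∞ δ) (hδ₀ : δ 0 = 0) (h₁ : (fun τ => pdy h (δ τ)) =O[𝓝 0] (· ^ k))
    (h₂ : (fun τ => pdy (pdy h) (δ τ)) =O[𝓝 0] (· ^ k)) :
    (fun τ => pdy g (a (δ τ), b (δ τ))) =O[𝓝 0] (· ^ k) ∧
      (fun τ => pdy (pdy g) (a (δ τ), b (δ τ))) =O[𝓝 0] (· ^ k) := by
  have htend : Tendsto δ (𝓝 0) (𝓝 0) := by simpa [hδ₀] using hδ.continuous.tendsto 0
  have hcont {c : ℝ × ℝ → ℝ} (hc : ContDiff ℝ ∞ c) : ContinuousAt (fun τ => c (δ τ)) 0 :=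
    (hc.comp hδ).continuous.continuousAt
  have hbδ := contDiff_pdy hb
  have hgx := contDiff_pdx (contDiff_pdy hg)
  have hM : ContDiff ℝ ∞ fun p => pdy K p - J p * pdx (pdy g) (a p, b p) * pdy b p := by
    have hK' := contDiff_pdy hK
    fun_prop
  have hg₁ : (fun τ => pdy g (a (δ τ), b (δ τ))) =O[𝓝 0] (· ^ k) := by
    refine isBigO_of_continuousAt_mul (hcont hbδ) (by rwa [hδ₀]) ?_
    exact (isBigO_continuousAt_mul (hcont hK) h₁).congr' ((htend.eventually hKg).mono
      fun τ hτ => hτ.symm) .rfl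
  refine ⟨hg₁, isBigO_of_continuousAt_mul (hcont (hbδ.pow 2)) (by simpa [hδ₀] using hb') ?_⟩
  exact (((isBigO_continuousAt_mul (hcont hM) h₁).add (isBigO_continuousAt_mul (hcont hK) h₂)).sub
    (isBigO_continuousAt_mul (hcont (contDiff_pdy hbδ)) hg₁)).congr'
    ((htend.eventually (pdy_pdy_comp_eq hg hh hK ha hb hJa hKg)).mono fun τ hτ => hτ.symm) .rfl

lemma HasCuspContact.of_aEquiv {k : ℕ} (hg : ContDiff ℝ ∞ g) (hh : ContDiff ℝ ∞ h) (hg₀ : g 0 = 0)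
    (hh₀ : pdy h 0 = 0) (hequiv : AEquiv (fun p => (p.1, g p)) (fun p => (p.1, h p)))
    (hk : HasCuspContact h k) : HasCuspContact g k := by
  obtain ⟨φ, ψ, hφ, hψ, hψg⟩ := AEquiv.iff_exists_isDiffeoGerm.1 hequiv
  obtain ⟨θ, hθ, hθψ, -⟩ := hψ.exists_inverse
  obtain ⟨δ, hδ, hδ₀, hδ', h₁, h₂⟩ := hk
  have hφ' := hφ.contDiff
  have hθ' := hθ.contDiff
  have hrel : ∀ᶠ p in 𝓝 0, ((φ p).1, g (φ p)) = θ (p.1, h p) := by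
    filter_upwards [hψg, ((tendsto_prodMk_fst hg hg₀).comp hφ.tendsto).eventually hθψ]
      with p hp hp'
    exact hp'.symm.trans (congrArg θ hp)
  have ha : ContDiff ℝ ∞ fun p => (φ p).1 := by fun_prop
  have hb : ContDiff ℝ ∞ fun p => (φ p).2 := by fun_prop
  obtain ⟨J, K, hJ, hK, hJa, hKg⟩ := exists_pdy_comp_eq_mul (A := fun p => (θ p).1)
    (B := fun p => (θ p).2) (a := fun p => (φ p).1) (b := fun p => (φ p).2) hg hh (by fun_prop)
    (by fun_prop) ha hb (hrel.mono fun p hp => (Prod.ext_iff.1 hp).1)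
    (hrel.mono fun p hp => (Prod.ext_iff.1 hp).2)
  have hb' := hφ.pdy_snd_ne_zero (by rw [hJa.self_of_nhds, hh₀, mul_zero])
  exact ⟨fun τ => φ (δ τ), by fun_prop, (congrArg φ hδ₀).trans hφ.map_zero,
    hφ.deriv_comp_ne_zero hδ hδ₀ hδ', isBigO_along_curve (a := fun p => (φ p).1)
      (b := fun p => (φ p).2) hg hh hJ hK ha hb hb' hJa hKg hδ hδ₀ h₁ h₂⟩

end CuspContact

section CuspGraph

variable {g G : ℝ × ℝ → ℝ} {Y Z : ℝ → ℝ} {k m : ℕ}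

lemma isBigO_pow_of_le {f : ℝ → ℝ} (hkm : k ≤ m) (hf : f =O[𝓝 0] (· ^ m)) :
    f =O[𝓝 0] (· ^ k) :=
  hkm.eq_or_lt.elim (fun h => h ▸ hf) fun h => hf.trans (Asymptotics.isLittleO_pow_pow h).isBigO

lemma IsCuspidal.exists_inverse_abscissa {δ : ℝ → ℝ × ℝ} (hg : IsCuspidal g)
    (hδ : ContDiff ℝ ∞ δ) (hδ₀ : δ 0 = 0) (hδ' : deriv δ 0 ≠ 0) (hk : 2 ≤ k)
    (h : (fun τ => pdy (pdy g) (δ τ)) =O[𝓝 0] (· ^ k)) :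
    ∃ σ : ℝ → ℝ, ContDiff ℝ ∞ σ ∧ σ 0 = 0 ∧ ∀ᶠ x in 𝓝 0, (δ (σ x)).1 = x := by
  have hd := (hδ.differentiable (by simp) 0).hasDerivAt
  have hx : HasDerivAt (fun τ => (δ τ).1) (deriv δ 0).1 0 := hd.fst
  have hy : HasDerivAt (fun τ => (δ τ).2) (deriv δ 0).2 0 := hd.snd
  have hchain := hasDerivAt_comp_prodMk (contDiff_pdy (contDiff_pdy hg.contDiff)) hx hy
  have hflat : HasDerivAt (fun τ => pdy (pdy g) (δ τ)) 0 0 := by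
    have h' : (fun τ => pdy (pdy g) (δ τ)) =O[𝓝 0] fun τ => ‖τ - 0‖ ^ k :=
      h.trans (Asymptotics.isBigO_of_le _ fun τ => by simp)
    exact (h'.hasFDerivAt (𝕜 := ℝ) hk).hasDerivAt
  have hzero := hchain.unique hflat
  rw [hδ₀] at hzero
  have hx' : (deriv δ 0).1 ≠ 0 := by
    intro h₀
    have h₁ : (deriv δ 0).2 = 0 := by
      rw [h₀, zero_mul, zero_add] at hzero
      exact (mul_eq_zero.1 hzero).resolve_right hg.pdy_pdy_pdy_zero
    exact hδ' (Prod.ext h₀ h₁)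
  obtain ⟨σ, hσ, hσ₀, hinv⟩ := exists_contDiff_implicit_real (a := 0)
    (H := fun p : ℝ × ℝ => (δ p.2).1 - p.1) (by fun_prop) (by simp [hδ₀]) (hx.sub_const 0) hx'
  exact ⟨σ, hσ, hσ₀, hinv.mono fun x => sub_eq_zero.1⟩

lemma HasCuspContact.exists_graph (hg : IsCuspidal g) (hk : 2 ≤ k) (hcontact : HasCuspContact g k) :
    ∃ Z : ℝ → ℝ, ContDiff ℝ ∞ Z ∧ Z 0 = 0 ∧ (fun x => pdy g (x, Z x)) =O[𝓝 0] (· ^ k) ∧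
      (fun x => pdy (pdy g) (x, Z x)) =O[𝓝 0] (· ^ k) := by
  obtain ⟨δ, hδ, hδ₀, hδ', h₁, h₂⟩ := hcontact
  obtain ⟨σ, hσ, hσ₀, hinv⟩ := hg.exists_inverse_abscissa hδ hδ₀ hδ' hk h₂
  have htend : Tendsto σ (𝓝 0) (𝓝 0) := by simpa [hσ₀] using hσ.continuous.tendsto 0
  have hσO : σ =O[𝓝 0] (fun x : ℝ => x) := by
    simpa [hσ₀] using (hσ.differentiable (by simp) 0).isBigO_sub
  have hreparam {G : ℝ × ℝ → ℝ} (hG : (fun τ => G (δ τ)) =O[𝓝 0] (· ^ k)) :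
      (fun x => G (x, (δ (σ x)).2)) =O[𝓝 0] (· ^ k) := by
    refine ((hG.comp_tendsto htend).trans (hσO.pow k)).congr' (hinv.mono fun x hx => ?_) .rfl
    exact congrArg G (Prod.ext hx rfl)
  exact ⟨fun x => (δ (σ x)).2, by fun_prop, by simp [hσ₀, hδ₀], hreparam h₁, hreparam h₂⟩

lemma isBigO_sub_of_isBigO_comp {f : ℝ → ℝ} (hG : ContDiff ℝ ∞ G) (hG' : pdy G 0 ≠ 0)
    (hY : ContDiff ℝ ∞ Y) (hZ : ContDiff ℝ ∞ Z) (hY₀ : Y 0 = 0) (hZ₀ : Z 0 = 0)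
    (hYf : (fun x => G (x, Y x)) =O[𝓝 0] f) (hZf : (fun x => G (x, Z x)) =O[𝓝 0] f) :
    (fun x => Y x - Z x) =O[𝓝 0] f := by
  obtain ⟨R, hR, hGR⟩ := exists_contDiff_taylor_two hG
  rw [partialSnd_eq_pdy hG] at hGR
  have hGy := contDiff_pdy hG
  have hc : ContDiff ℝ ∞ fun x => pdy G (x, Z x) + (Y x - Z x) * R ((x, Z x), Y x - Z x) := by
    fun_prop
  refine isBigO_of_continuousAt_mul hc.continuous.continuousAt
    (by simpa [hY₀, hZ₀, Prod.mk_zero_zero] using hG') ((hYf.sub hZf).congr_left fun x => ?_)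
  have hx := hGR x (Z x) (Y x - Z x)
  rw [add_sub_cancel] at hx
  linear_combination hx

lemma IsCuspidal.isBigO_pdy_sub (hg : IsCuspidal g) (hY : ContDiff ℝ ∞ Y) (hZ : ContDiff ℝ ∞ Z)
    (hY₀ : Y 0 = 0) (hZ₀ : Z 0 = 0) (hYm : (fun x => pdy (pdy g) (x, Y x)) =O[𝓝 0] (· ^ m))
    (hZm : (fun x => pdy (pdy g) (x, Z x)) =O[𝓝 0] (· ^ m)) (hk : k ≤ 2 * m) :
    (fun x => pdy g (x, Y x) - pdy g (x, Z x)) =O[𝓝 0] (· ^ k) := by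
  have hg' := contDiff_pdy hg.contDiff
  have hsub := isBigO_sub_of_isBigO_comp (contDiff_pdy hg') hg.pdy_pdy_pdy_zero hY hZ hY₀ hZ₀
    hYm hZm
  obtain ⟨R, hR, hgR⟩ := exists_contDiff_taylor_two hg'
  rw [partialSnd_eq_pdy hg'] at hgR
  have hc : ContDiff ℝ ∞ fun x => R ((x, Z x), Y x - Z x) := by fun_prop
  refine isBigO_pow_of_le hk (((hsub.mul hZm).add (isBigO_continuousAt_mul
    hc.continuous.continuousAt (hsub.mul hsub))).congr (fun x => ?_) fun x => ?_)
  · have hx := hgR x (Z x) (Y x - Z x)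
    rw [add_sub_cancel] at hx
    linear_combination -hx
  · ring

theorem IsCuspidal.hasCuspContact_iff (hg : IsCuspidal g) (hY : ContDiff ℝ ∞ Y) (hY₀ : Y 0 = 0)
    (hYm : (fun x => pdy (pdy g) (x, Y x)) =O[𝓝 0] (· ^ m)) (hk : 2 ≤ k) (hkm : k ≤ 2 * m) :
    HasCuspContact g k ↔ (fun x => pdy g (x, Y x)) =O[𝓝 0] (· ^ k) := by
  constructor
  · intro hcontact
    obtain ⟨Z, hZ, hZ₀, hZk, hZk'⟩ := hcontact.exists_graph hg hk
    have hsub := hg.isBigO_pdy_sub (m := min m k) (k := k) hY hZ hY₀ hZ₀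
      (isBigO_pow_of_le (min_le_left _ _) hYm) (isBigO_pow_of_le (min_le_right _ _) hZk') (by omega)
    exact (hsub.add hZk).congr_left fun x => sub_add_cancel _ _
  · intro hYk
    have hg' := contDiff_pdy (contDiff_pdy hg.contDiff)
    obtain ⟨Z, hZ, hZ₀, hroot⟩ := exists_contDiff_implicit_real hg' hg.pdy_pdy_zero
      (hasDerivAt_pdy hg' 0 0) hg.pdy_pdy_pdy_zero
    have hZO (n : ℕ) : (fun x => pdy (pdy g) (x, Z x)) =O[𝓝 0] (· ^ n) :=
      (Asymptotics.isBigO_zero _ _).congr' (hroot.mono fun x hx => hx.symm) .rfl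
    have hsub := hg.isBigO_pdy_sub hY hZ hY₀ hZ₀ hYm (hZO m) hkm
    have hδ' : HasDerivAt (fun x => (x, Z x)) (1, deriv Z 0) 0 :=
      (hasDerivAt_id' 0).prodMk (hZ.differentiable (by simp) 0).hasDerivAt
    refine ⟨fun x => (x, Z x), by fun_prop, by simp [hZ₀, Prod.mk_zero_zero], ?_, ?_, hZO k⟩
    · simp [hδ'.deriv]
    · exact (hYk.sub hsub).congr_left fun x => sub_sub_cancel _ _

end CuspGraph

section NormalForm

variable {w : ℝ → ℝ} {k n : ℕ}

lemma isBigO_id_mul_iff (hw : ContinuousAt w 0) :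
    (fun x => x * w x) =O[𝓝 0] (· ^ (n + 1)) ↔ w =O[𝓝 0] (· ^ n) := by
  constructor
  · intro h
    obtain ⟨C, hC⟩ := Asymptotics.isBigO_iff.1 h
    have hne : ∀ᶠ x in 𝓝[≠] 0, ‖w x‖ ≤ C * ‖x ^ n‖ := by
      filter_upwards [hC.filter_mono nhdsWithin_le_nhds, self_mem_nhdsWithin] with x hx hx₀
      refine le_of_mul_le_mul_left ?_ (norm_pos_iff.2 hx₀)
      calc ‖x‖ * ‖w x‖ ≤ C * ‖x ^ (n + 1)‖ := by rwa [← norm_mul]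
        _ = ‖x‖ * (C * ‖x ^ n‖) := by rw [pow_succ, norm_mul]; ring
    have hzero : ‖w 0‖ ≤ C * ‖(0 : ℝ) ^ n‖ :=
      le_of_tendsto_of_tendsto (hw.norm.mono_left nhdsWithin_le_nhds)
        ((by fun_prop : Continuous fun x : ℝ => C * ‖x ^ n‖).tendsto' 0 _ rfl |>.mono_left
          nhdsWithin_le_nhds) hne
    refine Asymptotics.IsBigO.of_bound C ?_
    rw [← nhdsNE_sup_pure]
    exact eventually_sup.2 ⟨hne, eventually_pure.2 hzero⟩
  · intro h
    simpa only [pow_succ'] using (Asymptotics.isBigO_refl (fun x : ℝ => x) (𝓝 0)).mul h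

lemma isBigO_pow_mul_iff (hw : ContinuousAt w 0) :
    (fun x => x ^ k * w x) =O[𝓝 0] (· ^ (k + n)) ↔ w =O[𝓝 0] (· ^ n) := by
  induction k with
  | zero => simp
  | succ k ih =>
    have hc : ContinuousAt (fun x => x ^ k * w x) 0 := by fun_prop
    rw [← ih, ← isBigO_id_mul_iff hc, show k + 1 + n = k + n + 1 by omega]
    simp only [pow_succ', mul_assoc]

lemma isBigO_const_add_id_mul_iff {c : ℝ} (hw : ContinuousAt w 0) :
    (fun x => c + x * w x) =O[𝓝 0] (· ^ (n + 1)) ↔ c = 0 ∧ w =O[𝓝 0] (· ^ n) := by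
  have hc (h : (fun x => c + x * w x) =O[𝓝 0] (· ^ (n + 1))) : c = 0 := by
    simpa using h.eq_zero_imp.self_of_nhds
  constructor
  · intro h
    obtain rfl := hc h
    exact ⟨rfl, (isBigO_id_mul_iff hw).1 (by simpa only [zero_add] using h)⟩
  · rintro ⟨rfl, h⟩
    simpa only [zero_add] using (isBigO_id_mul_iff hw).2 h

lemma exists_eq_pow_mul {a : ℝ → ℝ} (ha : ContDiff ℝ ∞ a) (hk : a =O[𝓝 0] (· ^ k)) :
    ∃ u : ℝ → ℝ, ContDiff ℝ ∞ u ∧ ∀ x, a x = x ^ k * u x := by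
  induction k generalizing a with
  | zero => exact ⟨a, ha, by simp⟩
  | succ k ih =>
    obtain ⟨r, hr, har⟩ := exists_contDiff_taylor ha 1
    simp only [Finset.range_one, Finset.sum_singleton, iteratedDeriv_zero, Nat.factorial_zero,
      Nat.cast_one, div_one, pow_zero, mul_one, pow_one] at har
    obtain ⟨ha₀, hrk⟩ := (isBigO_const_add_id_mul_iff hr.continuous.continuousAt).1
      (hk.congr_left har)
    obtain ⟨u, hu, hru⟩ := ih hr hrk
    exact ⟨u, hu, fun x => by rw [har, ha₀, hru]; ring⟩

lemma exists_sign_mul_pow {c : ℝ} (hc : c ≠ 0) (hk : k ≠ 0) :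
    ∃ ε v : ℝ, (ε = 1 ∨ ε = -1) ∧ v ≠ 0 ∧ ε * v ^ k = c := by
  have hroot : (|c| ^ (k⁻¹ : ℝ)) ^ k = |c| := Real.rpow_inv_natCast_pow (abs_nonneg c) hk
  have hv : |c| ^ (k⁻¹ : ℝ) ≠ 0 := (Real.rpow_pos_of_pos (abs_pos.2 hc) _).ne'
  rcases hc.lt_or_gt with hneg | hpos
  · exact ⟨-1, _, .inr rfl, hv, by rw [hroot, abs_of_neg hneg]; ring⟩
  · exact ⟨1, _, .inl rfl, hv, by rw [hroot, abs_of_pos hpos]; ring⟩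

lemma exists_smooth_root {u : ℝ → ℝ} {ε v₀ : ℝ} (hu : ContDiff ℝ ∞ u) (hk : k ≠ 0) (hε : ε ≠ 0)
    (hv₀ : v₀ ≠ 0) (hu₀ : ε * v₀ ^ k = u 0) :
    ∃ v : ℝ → ℝ, ContDiff ℝ ∞ v ∧ v 0 = v₀ ∧ ∀ᶠ x in 𝓝 0, ε * v x ^ k = u x := by
  obtain ⟨v, hv, hvv₀, hroot⟩ := exists_contDiff_implicit_real (a := 0) (b := v₀)
    (H := fun p : ℝ × ℝ => ε * p.2 ^ k - u p.1) (by fun_prop) (sub_eq_zero.2 hu₀)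
    (((hasDerivAt_pow k v₀).const_mul ε).sub_const (u 0))
    (mul_ne_zero hε (mul_ne_zero (Nat.cast_ne_zero.2 hk) (pow_ne_zero _ hv₀)))
  exact ⟨v, hv, hvv₀, hroot.mono fun x => sub_eq_zero.1⟩

lemma aEquiv_cubicFamily_comp {a b X : ℝ → ℝ} (ha : ContDiff ℝ ∞ a) (hb : ContDiff ℝ ∞ b)
    (hX : ContDiff ℝ ∞ X) (hX₀ : X 0 = 0) (hX' : deriv X 0 ≠ 0)
    (hbX : ∀ᶠ x in 𝓝 0, b (X x) = a x) :
    AEquiv (fun p => (p.1, cubicFamily a p)) (fun p => (p.1, cubicFamily b p)) := by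
  have hsnd : IsDiffeoGerm fun p : ℝ × ℝ => (X p.1, p.2) := by
    refine .prodMk_fst hX hX₀ hX' contDiff_snd rfl ?_
    rw [← Prod.mk_zero_zero, (hasDerivAt_pdy contDiff_snd 0 0).unique (hasDerivAt_id' 0)]
    exact one_ne_zero
  refine AEquiv.symm (tendsto_prodMk_fst (contDiff_cubicFamily hb) (cubicFamily_zero b))
    (AEquiv.of_eventually_eq hsnd hsnd .id
      (tendsto_prodMk_fst (contDiff_cubicFamily ha) (cubicFamily_zero a)) ?_)
  filter_upwards [(continuous_fst.tendsto (0 : ℝ × ℝ)).eventually hbX] with p hp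
  simp only [cubicFamily, hp]

lemma exists_aEquiv_cubicFamily_pow {a : ℝ → ℝ} (ha : ContDiff ℝ ∞ a) (hk : k ≠ 0)
    (hak : a =O[𝓝 0] (· ^ k)) (hak' : ¬a =O[𝓝 0] (· ^ (k + 1))) :
    ∃ ε : ℝ, (ε = 1 ∨ ε = -1) ∧ AEquiv (fun p => (p.1, cubicFamily a p))
      (fun p => (p.1, cubicFamily (fun x => ε * x ^ k) p)) := by
  obtain ⟨u, hu, hau⟩ := exists_eq_pow_mul ha hak
  have hu₀ : u 0 ≠ 0 := by
    intro hu₀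
    refine hak' ?_
    rw [funext hau, isBigO_pow_mul_iff hu.continuous.continuousAt]
    simpa [hu₀] using (hu.differentiable (by simp) 0).isBigO_sub
  obtain ⟨ε, v₀, hε, hv₀, hεv⟩ := exists_sign_mul_pow hu₀ hk
  obtain ⟨v, hv, rfl, hroot⟩ := exists_smooth_root hu hk (by rcases hε with rfl | rfl <;> simp)
    hv₀ hεv
  refine ⟨ε, hε, aEquiv_cubicFamily_comp (X := fun x => x * v x) ha (by fun_prop) (by fun_prop)
    (by simp) ?_ ?_⟩
  · rwa [(hasDerivAt_id_mul_zero hv.continuous.continuousAt).deriv]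
  · filter_upwards [hroot] with x hx
    rw [hau, ← hx]
    ring

lemma pdy_cubicFamily {a : ℝ → ℝ} (ha : ContDiff ℝ ∞ a) :
    pdy (cubicFamily a) = fun p => 3 * p.2 ^ 2 + a p.1 :=
  funext fun p => (hasDerivAt_pdy (contDiff_cubicFamily ha) p.1 p.2).unique
    (((hasDerivAt_pow 3 p.2).add ((hasDerivAt_id' p.2).const_mul (a p.1))).congr_deriv (by simp))

lemma pdy_pdy_cubicFamily {a : ℝ → ℝ} (ha : ContDiff ℝ ∞ a) :
    pdy (pdy (cubicFamily a)) = fun p => 6 * p.2 := by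
  rw [pdy_cubicFamily ha]
  exact funext fun p => (hasDerivAt_pdy (by fun_prop) p.1 p.2).unique
    ((((hasDerivAt_pow 2 p.2).const_mul 3).add_const (a p.1)).congr_deriv (by norm_num; ring))

lemma isCuspidal_cubicFamily {a : ℝ → ℝ} (ha : ContDiff ℝ ∞ a) (ha₀ : a 0 = 0) :
    IsCuspidal (cubicFamily a) where
  contDiff := contDiff_cubicFamily ha
  map_zero := cubicFamily_zero a
  pdy_zero := by simp [pdy_cubicFamily ha, ha₀]
  pdy_pdy_zero := by simp [pdy_pdy_cubicFamily ha]
  pdy_pdy_pdy_zero := by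
    rw [pdy_pdy_cubicFamily ha, ← Prod.mk_zero_zero, (hasDerivAt_pdy (by fun_prop) 0 0).unique
      ((hasDerivAt_id' (0 : ℝ)).const_mul (6 : ℝ))]
    norm_num

lemma hasCuspContact_cubicFamily_iff {a : ℝ → ℝ} (ha : ContDiff ℝ ∞ a) (ha₀ : a 0 = 0)
    (hk : 2 ≤ k) : HasCuspContact (cubicFamily a) k ↔ a =O[𝓝 0] (· ^ k) := by
  have hflat : (fun x => pdy (pdy (cubicFamily a)) (x, 0)) =O[𝓝 0] (· ^ k) := by
    simpa only [pdy_pdy_cubicFamily ha, mul_zero] using Asymptotics.isBigO_zero _ _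
  rw [(isCuspidal_cubicFamily ha ha₀).hasCuspContact_iff (m := k) contDiff_const rfl hflat hk
    (by omega)]
  simp [pdy_cubicFamily ha]

variable {g h : ℝ × ℝ → ℝ}

lemma IsCuspidal.hasCuspContact_iff_of_aEquiv (hg : IsCuspidal g) (hh : IsCuspidal h)
    (hequiv : AEquiv (fun p => (p.1, g p)) (fun p => (p.1, h p))) :
    HasCuspContact g k ↔ HasCuspContact h k :=
  ⟨.of_aEquiv hh.contDiff hg.contDiff hh.map_zero hg.pdy_zero
    (hequiv.symm (tendsto_prodMk_fst hg.contDiff hg.map_zero)),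
    .of_aEquiv hg.contDiff hh.contDiff hg.map_zero hh.pdy_zero hequiv⟩

theorem IsCuspidal.contact_order_eq_iff_exists_aEquiv (hg : IsCuspidal g) (hk : 2 ≤ k) :
    (HasCuspContact g k ∧ ¬HasCuspContact g (k + 1)) ↔ ∃ ε : ℝ, (ε = 1 ∨ ε = -1) ∧
      AEquiv (fun p => (p.1, g p)) (fun p => (p.1, p.2 ^ 3 + ε * p.1 ^ k * p.2)) := by
  constructor
  · obtain ⟨a, ha, ha₀, hga⟩ := hg.exists_aEquiv_cubicFamily
    have hiff {n : ℕ} (hn : 2 ≤ n) : HasCuspContact g n ↔ a =O[𝓝 0] (· ^ n) :=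
      (hg.hasCuspContact_iff_of_aEquiv (isCuspidal_cubicFamily ha ha₀) hga).trans
        (hasCuspContact_cubicFamily_iff ha ha₀ hn)
    rw [hiff hk, hiff (by omega)]
    rintro ⟨hak, hak'⟩
    obtain ⟨ε, hε, haε⟩ := exists_aEquiv_cubicFamily_pow ha (by omega) hak hak'
    exact ⟨ε, hε, hga.trans haε⟩
  · rintro ⟨ε, hε, hequiv⟩
    have ha : ContDiff ℝ ∞ fun x : ℝ => ε * x ^ k := by fun_prop
    have ha₀ : ε * (0 : ℝ) ^ k = 0 := by simp [show k ≠ 0 by omega]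
    have hiff {n : ℕ} (hn : 2 ≤ n) : HasCuspContact g n ↔
        (fun x => x ^ k * ε) =O[𝓝 0] (· ^ n) := by
      rw [hg.hasCuspContact_iff_of_aEquiv (isCuspidal_cubicFamily ha ha₀) hequiv,
        hasCuspContact_cubicFamily_iff ha ha₀ hn]
      simp only [mul_comm ε]
    have hconst (n : ℕ) :=
      isBigO_pow_mul_iff (k := k) (n := n) (w := fun _ => ε) continuousAt_const
    rw [hiff hk, hiff (by omega), hconst 1]
    have hbounded : (fun _ : ℝ => ε) =O[𝓝 0] (· ^ 0) := by
      simpa using Asymptotics.isBigO_const_const ε (one_ne_zero (α := ℝ)) (𝓝 0)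
    refine ⟨(hconst 0).2 hbounded, fun h => ?_⟩
    have hε₀ : ε = 0 := by simpa using h.eq_zero_imp.self_of_nhds
    rcases hε with rfl | rfl <;> simp at hε₀

lemma IsCuspidal.contact_order_eq_iff_aEquiv_of_odd (hg : IsCuspidal g) (hk : 2 ≤ k)
    (hodd : Odd k) :
    (HasCuspContact g k ∧ ¬HasCuspContact g (k + 1)) ↔
      AEquiv (fun p => (p.1, g p)) (fun p => (p.1, p.2 ^ 3 + p.1 ^ k * p.2)) := by
  rw [hg.contact_order_eq_iff_exists_aEquiv hk]
  refine ⟨?_, fun h => ⟨1, .inl rfl, by simpa only [one_mul] using h⟩⟩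
  rintro ⟨ε, hε, hequiv⟩
  have hε' : ε ^ k = ε := by rcases hε with rfl | rfl <;> simp [hodd.neg_one_pow]
  refine hequiv.trans (aEquiv_cubicFamily_comp (a := fun x => ε * x ^ k) (b := fun x => x ^ k)
    (X := fun x => ε * x) (by fun_prop) (by fun_prop) (by fun_prop) (by simp) ?_ ?_)
  · rw [((hasDerivAt_id' (0 : ℝ)).const_mul ε).deriv]
    rcases hε with rfl | rfl <;> simp
  · exact .of_forall fun x => by rw [mul_pow, hε']

end NormalForm

section Invariants

variable {g : ℝ × ℝ → ℝ}

lemma iterate_pdy_axis_expansion (hg : ContDiff ℝ ∞ g) (j n : ℕ) :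
    ∃ r : ℝ → ℝ, ContDiff ℝ ∞ r ∧ ∀ x, (pdy^[j] g) (x, 0) =
      (∑ i ∈ Finset.range n, j.factorial * tcoeff g i j * x ^ i) + x ^ n * r x := by
  have hj := contDiff_iterate_pdy hg j
  obtain ⟨r, hr, hgr⟩ := exists_contDiff_taylor (f := fun x => (pdy^[j] g) (x, 0)) (by fun_prop) n
  refine ⟨r, hr, fun x => ?_⟩
  have hcoeff (i : ℕ) : (pdx^[i] (pdy^[j] g)) 0 / i.factorial = j.factorial * tcoeff g i j := by
    unfold tcoeff
    field_simp
  simpa only [iteratedDeriv_pdx hj, Prod.mk_zero_zero, hcoeff] using hgr x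

lemma pdy_fiber_expansion (hg : ContDiff ℝ ∞ g) (n : ℕ) :
    ∃ R : ℝ × ℝ → ℝ, ContDiff ℝ ∞ R ∧ ∀ x y, g (x, y) =
      (∑ j ∈ Finset.range n, (pdy^[j] g) (x, 0) / j.factorial * y ^ j) + y ^ n * R (x, y) := by
  simpa only [iteratedDeriv_pdy hg] using exists_contDiff_taylor_param hg n

/-- The Taylor coefficients of `g` at the origin in total degree at most three are those
of `y³`. -/
def HasCubicThreeJet (g : ℝ × ℝ → ℝ) : Prop :=
  ∀ i j, i + j < 4 → tcoeff g i j = if (i, j) = (0, 3) then 1 else 0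

lemma HasCubicThreeJet.isCuspidal (hjet : HasCubicThreeJet g) (hg : ContDiff ℝ ∞ g) :
    IsCuspidal g where
  contDiff := hg
  map_zero := by simpa [tcoeff] using hjet 0 0 (by norm_num)
  pdy_zero := by simpa [tcoeff] using hjet 0 1 (by norm_num)
  pdy_pdy_zero := by simpa [tcoeff] using hjet 0 2 (by norm_num)
  pdy_pdy_pdy_zero := fun h => by simpa [tcoeff, h] using hjet 0 3 (by norm_num)

lemma HasCubicThreeJet.axis_expansions (hjet : HasCubicThreeJet g) (hg : ContDiff ℝ ∞ g) :
    ∃ r₁ r₂ r₃ : ℝ → ℝ, Continuous r₁ ∧ Continuous r₂ ∧ Continuous r₃ ∧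
      (∀ x, pdy g (x, 0) =
        tcoeff g 3 1 * x ^ 3 + tcoeff g 4 1 * x ^ 4 + tcoeff g 5 1 * x ^ 5 + x ^ 6 * r₁ x) ∧
      (∀ x, pdy (pdy g) (x, 0) =
        2 * tcoeff g 2 2 * x ^ 2 + 2 * tcoeff g 3 2 * x ^ 3 + x ^ 4 * r₂ x) ∧
      ∀ x, pdy (pdy (pdy g)) (x, 0) = 6 + 6 * tcoeff g 1 3 * x + x ^ 2 * r₃ x := by
  obtain ⟨r₁, hr₁, h₁⟩ := iterate_pdy_axis_expansion hg 1 6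
  obtain ⟨r₂, hr₂, h₂⟩ := iterate_pdy_axis_expansion hg 2 4
  obtain ⟨r₃, hr₃, h₃⟩ := iterate_pdy_axis_expansion hg 3 2
  refine ⟨r₁, r₂, r₃, hr₁.continuous, hr₂.continuous, hr₃.continuous, fun x => ?_, fun x => ?_,
    fun x => ?_⟩
  · simpa [Finset.sum_range_succ, hjet 0 1, hjet 1 1, hjet 2 1] using h₁ x
  · simpa [Finset.sum_range_succ, hjet 0 2, hjet 1 2] using h₂ x
  · simpa [Finset.sum_range_succ, hjet 0 3, Nat.factorial] using h₃ x

lemma HasCubicThreeJet.pdy_pdy_osculating_isBigO (hjet : HasCubicThreeJet g)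
    (hg : ContDiff ℝ ∞ g) :
    (fun x => pdy (pdy g) (x, -(tcoeff g 2 2 / 3) * x ^ 2)) =O[𝓝 0] (· ^ 3) := by
  obtain ⟨-, r₂, r₃, -, hr₂, hr₃, -, h₂, h₃⟩ := hjet.axis_expansions hg
  obtain ⟨R, hR, hgR⟩ := pdy_fiber_expansion (contDiff_pdy (contDiff_pdy hg)) 2
  simp only [Finset.sum_range_succ, Finset.sum_range_zero, Function.iterate_succ_apply',
    Function.iterate_zero, id_eq, h₂, h₃] at hgR
  have hR' := hR.continuous
  have hc : Continuous fun x => 2 * tcoeff g 3 2 - 2 * tcoeff g 2 2 * tcoeff g 1 3 + x * r₂ x -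
      tcoeff g 2 2 / 3 * x * r₃ x +
      (tcoeff g 2 2 / 3) ^ 2 * x * R (x, -(tcoeff g 2 2 / 3) * x ^ 2) := by fun_prop
  refine ((isBigO_pow_mul_iff (k := 3) (n := 0) hc.continuousAt).2 ?_).congr_left fun x => ?_
  · simpa only [pow_zero] using hc.continuousAt.isBigO_one ℝ
  · rw [hgR]
    push_cast [Nat.factorial]
    ring

lemma HasCubicThreeJet.exists_pdy_osculating (hjet : HasCubicThreeJet g) (hg : ContDiff ℝ ∞ g) :
    ∃ s : ℝ → ℝ, Continuous s ∧ ∀ x, pdy g (x, -(tcoeff g 2 2 / 3) * x ^ 2) =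
      x ^ 3 * (tcoeff g 3 1 + x * (tcoeff g 4 1 - 1 / 3 * tcoeff g 2 2 ^ 2 +
        x * (tcoeff g 5 1 - 2 / 3 * tcoeff g 3 2 * tcoeff g 2 2 +
          1 / 3 * tcoeff g 1 3 * tcoeff g 2 2 ^ 2 + x * s x))) := by
  obtain ⟨r₁, r₂, r₃, hr₁, hr₂, hr₃, h₁, h₂, h₃⟩ := hjet.axis_expansions hg
  obtain ⟨R, hR, hgR⟩ := pdy_fiber_expansion (contDiff_pdy hg) 3
  simp only [Finset.sum_range_succ, Finset.sum_range_zero, Function.iterate_succ_apply',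
    Function.iterate_zero, id_eq, h₁, h₂, h₃] at hgR
  have hR' := hR.continuous
  refine ⟨fun x => r₁ x - tcoeff g 2 2 / 3 * r₂ x + (tcoeff g 2 2 / 3) ^ 2 / 2 * r₃ x -
    (tcoeff g 2 2 / 3) ^ 3 * R (x, -(tcoeff g 2 2 / 3) * x ^ 2), by fun_prop, fun x => ?_⟩
  rw [hgR]
  push_cast [Nat.factorial]
  ring

lemma HasCubicThreeJet.hasCuspContact_iff (hjet : HasCubicThreeJet g) (hg : ContDiff ℝ ∞ g) :
    HasCuspContact g 3 ∧ (HasCuspContact g 4 ↔ tcoeff g 3 1 = 0) ∧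
    (HasCuspContact g 5 ↔
      tcoeff g 3 1 = 0 ∧ tcoeff g 4 1 - 1 / 3 * tcoeff g 2 2 ^ 2 = 0) ∧
    (HasCuspContact g 6 ↔
      tcoeff g 3 1 = 0 ∧ tcoeff g 4 1 - 1 / 3 * tcoeff g 2 2 ^ 2 = 0 ∧
      tcoeff g 5 1 - 2 / 3 * tcoeff g 3 2 * tcoeff g 2 2 +
        1 / 3 * tcoeff g 1 3 * tcoeff g 2 2 ^ 2 = 0) := by
  obtain ⟨s, hs, hgs⟩ := hjet.exists_pdy_osculating hg
  set c₃ := tcoeff g 3 1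
  set c₄ := tcoeff g 4 1 - 1 / 3 * tcoeff g 2 2 ^ 2
  set c₅ := tcoeff g 5 1 - 2 / 3 * tcoeff g 3 2 * tcoeff g 2 2 +
    1 / 3 * tcoeff g 1 3 * tcoeff g 2 2 ^ 2
  have hbounded {w : ℝ → ℝ} (hw : Continuous w) : w =O[𝓝 0] (· ^ 0) := by
    simpa only [pow_zero] using hw.continuousAt.isBigO_one ℝ
  have h₅ : Continuous fun x => c₅ + x * s x := by fun_prop
  have h₄ : Continuous fun x => c₄ + x * (c₅ + x * s x) := by fun_prop
  have h₃ : Continuous fun x => c₃ + x * (c₄ + x * (c₅ + x * s x)) := by fun_prop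
  have hcontact (n : ℕ) (hn : n ≤ 3) : HasCuspContact g (3 + n) ↔
      (fun x => c₃ + x * (c₄ + x * (c₅ + x * s x))) =O[𝓝 0] (· ^ n) := by
    rw [← isBigO_pow_mul_iff h₃.continuousAt, ← funext hgs]
    exact (hjet.isCuspidal hg).hasCuspContact_iff (by fun_prop) (by simp)
      (hjet.pdy_pdy_osculating_isBigO hg) (by omega) (by omega)
  refine ⟨(hcontact 0 (by simp)).2 (hbounded h₃), ?_, ?_, ?_⟩
  · rw [hcontact 1 (by simp), isBigO_const_add_id_mul_iff h₄.continuousAt,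
      and_iff_left (hbounded h₄)]
  · rw [hcontact 2 (by simp), isBigO_const_add_id_mul_iff h₄.continuousAt,
      isBigO_const_add_id_mul_iff h₅.continuousAt, and_iff_left (hbounded h₅)]
  · rw [hcontact 3 (by simp), isBigO_const_add_id_mul_iff h₄.continuousAt,
      isBigO_const_add_id_mul_iff h₅.continuousAt, isBigO_const_add_id_mul_iff hs.continuousAt,
      and_iff_left (hbounded hs)]

end Invariants

end

theorem stmt15 (f : ℝ × ℝ → ℝ × ℝ) (g : ℝ × ℝ → ℝ) (hf0 : f 0 = 0)
    (hform : HasForm f g 4 (fun i j => if (i, j) = (0, 3) then 1 else 0)) :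
    (tcoeff g 3 1 ≠ 0 ↔
      AEquiv f (fun p => (p.1, p.2 ^ 3 + p.1 ^ 3 * p.2))) ∧
    ((tcoeff g 3 1 = 0 ∧ tcoeff g 4 1 - 1 / 3 * tcoeff g 2 2 ^ 2 ≠ 0) ↔
      ∃ ε : ℝ, (ε = 1 ∨ ε = -1) ∧
        AEquiv f (fun p => (p.1, p.2 ^ 3 + ε * p.1 ^ 4 * p.2))) ∧
    ((tcoeff g 3 1 = 0 ∧ tcoeff g 4 1 - 1 / 3 * tcoeff g 2 2 ^ 2 = 0 ∧
        tcoeff g 5 1 - 2 / 3 * tcoeff g 3 2 * tcoeff g 2 2 +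
          1 / 3 * tcoeff g 1 3 * tcoeff g 2 2 ^ 2 ≠ 0) ↔
      ∃ ε : ℝ, (ε = 1 ∨ ε = -1) ∧
        AEquiv f (fun p => (p.1, p.2 ^ 3 + ε * p.1 ^ 5 * p.2))) := by
  obtain ⟨hg, hf, hjet⟩ := hform
  obtain rfl : f = fun p => (p.1, g p) := funext hf
  have hjet : HasCubicThreeJet g := hjet
  have hcusp := hjet.isCuspidal hg
  obtain ⟨h₃, h₄, h₅, h₆⟩ := hjet.hasCuspContact_iff hg
  rw [← hcusp.contact_order_eq_iff_aEquiv_of_odd (k := 3) (by simp) (by decide),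
    ← hcusp.contact_order_eq_iff_exists_aEquiv (k := 4) (by simp),
    ← hcusp.contact_order_eq_iff_exists_aEquiv (k := 5) (by simp), h₄, h₅, h₆]
  tauto
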